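/- arXiv:1305.3041 — 8 statements merged into one kernel-verified Lean document; each statement's English description precedes it below -/
import Mathlib

section
/- Let a ≥ 1 and n ≥ 1 be natural numbers, and let M be an n×n matrix with entries in {0,1} that contains no a×a all-ones submatrix (i.e., M is (a−1)-free). Then the number of ones in M is at most (a−1)^(1/a) · n^(2−1/a) + (a−1)·n. -/
/-!
Write `d i` for the number of ones in row `i`. Counting pairs `(i, J)` where `J` is an `a`-set of
columns on which row `i` is all ones gives `∑ i, (d i).choose a ≤ (a - 1) * n.choose a`, since no
`a`-set of columns is covered by `a` different rows. Multiplying by `a!` and using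
`(d - (a - 1)) ^ a ≤ d.descFactorial a` and `n.descFactorial a ≤ n ^ a`, the truncated excesses
`y i = d i - (a - 1)` satisfy `∑ i, y i ^ a ≤ (a - 1) * n ^ a`. The power mean inequality turns this
into `(∑ i, y i) ^ a ≤ (a - 1) * n ^ (2 * a - 1)`. Taking `a`-th roots and adding back `a - 1` for
each row bounds `∑ i, d i`. Truncating before averaging avoids any convexity statement about
binomial coefficients.
-/

/-- Double counting of pairs `(i, J)` with `J` an `a`-subset of `R i`: if no `b + 1` indices share
a common `a`-subset, each `J` is counted at most `b` times. -/
lemma sum_choose_card_le {n a b : ℕ} (R : Fin n → Finset (Fin n))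
    (hR : ∀ J : Finset (Fin n), J.card = a → (Finset.univ.filter fun i => J ⊆ R i).card ≤ b) :
    ∑ i, (R i).card.choose a ≤ b * n.choose a := by
  classical
  calc ∑ i, (R i).card.choose a
      = ∑ i, ((Finset.univ.powersetCard a).filter fun J => J ⊆ R i).card := by
        refine Finset.sum_congr rfl fun i _ => ?_
        rw [← Finset.card_powersetCard]
        congr 1
        ext J
        simp [Finset.mem_powersetCard, and_comm]
    _ = ∑ J ∈ (Finset.univ : Finset (Fin n)).powersetCard a,
          (Finset.univ.filter fun i => J ⊆ R i).card := by
        simp only [Finset.card_filter]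
        exact Finset.sum_comm
    _ ≤ ∑ J ∈ (Finset.univ : Finset (Fin n)).powersetCard a, b :=
        Finset.sum_le_sum fun J hJ => hR J (Finset.mem_powersetCard.1 hJ).2
    _ = b * n.choose a := by simp [Finset.card_powersetCard, mul_comm]

/-- The `(b + 1)`-st power sum of the excesses `d i - b` is controlled by the count of
`(b + 1)`-subsets. -/
lemma sum_sub_pow_le {n b : ℕ} (d : Fin n → ℕ)
    (hd : ∑ i, (d i).choose (b + 1) ≤ b * n.choose (b + 1)) :
    ∑ i, (d i - b) ^ (b + 1) ≤ b * n ^ (b + 1) := by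
  calc ∑ i, (d i - b) ^ (b + 1)
      ≤ ∑ i, (d i).descFactorial (b + 1) := by
        refine Finset.sum_le_sum fun i _ => ?_
        simpa using Nat.pow_sub_le_descFactorial (d i) (b + 1)
    _ = (b + 1).factorial * ∑ i, (d i).choose (b + 1) := by
        simp only [Nat.descFactorial_eq_factorial_mul_choose, Finset.mul_sum]
    _ ≤ (b + 1).factorial * (b * n.choose (b + 1)) := Nat.mul_le_mul_left _ hd
    _ = b * n.descFactorial (b + 1) := by
        rw [Nat.descFactorial_eq_factorial_mul_choose]; ring
    _ ≤ b * n ^ (b + 1) := Nat.mul_le_mul_left _ (Nat.descFactorial_le_pow _ _)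

/-- Power mean inequality followed by extraction of the `(b + 1)`-st root. -/
lemma sum_le_of_sum_pow_le {n b : ℕ} (hn : 1 ≤ n) (y : Fin n → ℕ)
    (hy : ∑ i, y i ^ (b + 1) ≤ b * n ^ (b + 1)) :
    ((∑ i, y i : ℕ) : ℝ) ≤
      (b : ℝ) ^ ((1 : ℝ) / (b + 1 : ℕ)) * (n : ℝ) ^ (2 - (1 : ℝ) / (b + 1 : ℕ)) := by
  have hn0 : (0 : ℝ) < n := by exact_mod_cast hn
  have hb0 : ((b + 1 : ℕ) : ℝ) ≠ 0 := by positivity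
  have hy' : ∑ i, (y i : ℝ) ^ (b + 1) ≤ b * (n : ℝ) ^ (b + 1) := by exact_mod_cast hy
  have hmean := pow_sum_div_card_le_sum_pow (s := Finset.univ) (f := fun i => (y i : ℝ))
    (fun i _ => Nat.cast_nonneg _) b
  rw [Finset.card_univ, Fintype.card_fin, div_le_iff₀ (by positivity)] at hmean
  refine le_of_pow_le_pow_left₀ (Nat.succ_ne_zero b) (by positivity) ?_
  have hroot : ((b : ℝ) ^ ((1 : ℝ) / (b + 1 : ℕ))) ^ (b + 1) = b := by
    rw [one_div]; exact Real.rpow_inv_natCast_pow (Nat.cast_nonneg _) (Nat.succ_ne_zero b)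
  have hexp : ((n : ℝ) ^ (2 - (1 : ℝ) / (b + 1 : ℕ))) ^ (b + 1) = (n : ℝ) ^ (b + 1 + b) := by
    rw [← Real.rpow_natCast, ← Real.rpow_mul hn0.le, ← Real.rpow_natCast]
    congr 1
    rw [sub_mul, one_div, inv_mul_cancel₀ hb0]
    push_cast
    ring
  rw [mul_pow, hroot, hexp, Nat.cast_sum]
  calc _ ≤ _ := hmean
    _ ≤ b * (n : ℝ) ^ (b + 1) * (n : ℝ) ^ b := by gcongr
    _ = b * (n : ℝ) ^ (b + 1 + b) := by ring


/-- **Kővári–Sós–Turán theorem.** If an `n × n` 0/1 matrix `M` contains no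
`a × a` all-ones submatrix (i.e. is `(a-1)`-free), then the number of ones in `M`
is at most `(a-1)^(1/a) * n^(2 - 1/a) + (a-1) * n`. -/
theorem kovari_sos_turan (a n : ℕ) (ha : 1 ≤ a) (hn : 1 ≤ n)
    (M : Matrix (Fin n) (Fin n) ℕ)
    (h01 : ∀ i j, M i j = 0 ∨ M i j = 1)
    (hfree : ¬ ∃ I J : Finset (Fin n), I.card = a ∧ J.card = a ∧
      ∀ i ∈ I, ∀ j ∈ J, M i j = 1) :
    ({p : Fin n × Fin n | M p.1 p.2 = 1}.ncard : ℝ) ≤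
      ((a : ℝ) - 1) ^ ((1 : ℝ) / a) * (n : ℝ) ^ (2 - (1 : ℝ) / a)
        + ((a : ℝ) - 1) * n := by
  classical
  obtain ⟨b, rfl⟩ : ∃ b, a = b + 1 := ⟨a - 1, by omega⟩
  set R : Fin n → Finset (Fin n) := fun i => Finset.univ.filter fun j => M i j = 1 with hRdef
  have hR : ∀ J : Finset (Fin n), J.card = b + 1 →
      (Finset.univ.filter fun i => J ⊆ R i).card ≤ b := by
    intro J hJ
    by_contra! hlt
    obtain ⟨I, hI, hIcard⟩ := Finset.exists_subset_card_eq (Nat.succ_le_of_lt hlt)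
    refine hfree ⟨I, J, hIcard, hJ, fun i hi j hj => ?_⟩
    exact (Finset.mem_filter.1 ((Finset.mem_filter.1 (hI hi)).2 hj)).2
  have hones : {p : Fin n × Fin n | M p.1 p.2 = 1}.ncard = ∑ i, (R i).card := by
    rw [Set.ncard_eq_toFinset_card', Set.toFinset_ofPred]
    simp only [hRdef, Finset.card_filter]
    exact Fintype.sum_prod_type _
  have hle : ∑ i, (R i).card ≤ ∑ i, ((R i).card - b) + b * n := by
    calc ∑ i, (R i).card ≤ ∑ i, ((R i).card - b + b) :=
          Finset.sum_le_sum fun i _ => by omega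
      _ = _ := by simp [Finset.sum_add_distrib, mul_comm]
  have hmain := sum_le_of_sum_pow_le hn _ (sum_sub_pow_le _ (sum_choose_card_le R hR))
  have hb : (((b + 1 : ℕ) : ℝ) - 1) = b := by push_cast; ring
  rw [hones, hb]
  calc ((∑ i, (R i).card : ℕ) : ℝ) ≤ (∑ i, ((R i).card - b) : ℕ) + (b : ℝ) * n := by
        exact_mod_cast hle
    _ ≤ _ := by gcongr
end

section
/- There exists m₀ such that for all m ≥ m₀ the following holds. Fix indices p, q ∈ [m] and an m×m matrix M over 𝔽₂ (whose entry at position (p,q) is regarded as undefined). For a ∈ 𝔽₂, let N(a) be the number of pairs (B, C), where B is an m×7m matrix over 𝔽₂ and C is a 7m×m matrix over 𝔽₂, such that (B·C)(i,j) = M(i,j) for every position (i,j) ≠ (p,q) and (B·C)(p,q) = a. If N(0) + N(1) > 0, then the ratio N(1)/(N(0)+N(1)) lies strictly between 1/2 − 1/m and 1/2 + 1/m. -/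
/-!
The proof shows the stronger bound `|N 1 - N 0| ≤ 2 ^ (-5 m) * (N 0 + N 1)`, by two injections.

Call `B` *free at `p`* if `B u = e_p` for some `u`, that is, if row `p` of `B` is not in the span of
the other rows. Adding `u` to column `q` of `C` then changes the entry `(p, q)` of `B * C` by one and
no other entry, so among the factorizations with `B` free at `p` both values of the entry occur
equally often (`card_free_le`). Hence `|N 1 - N 0|` is at most the number of factorizations in which
`B` is not free at `p`.

These are rare (`card_not_free_mul_le`). If `B` is not free at `p`, its row `p` is determined by the
other rows and by the coefficients of a linear combination, for which there are at most `2 ^ m`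
choices. On the other hand, adding to row `p` of `B` any `w` with `w C = 0` keeps the product, and
there are at least `2 ^ (7 m - m)` such `w` (`two_pow_le_card_ker`). So the factorizations in
question make up at most a fraction `2 ^ m * 2 ^ m / 2 ^ (7 m)` of all.
-/

open Matrix

/-- The pair `(B, C)` is a factorization consistent with `M` off the position `(p, q)`. -/
def ConsistentOff {m n : ℕ} (p q : Fin m) (M : Matrix (Fin m) (Fin m) (ZMod 2))
    (BC : Matrix (Fin m) (Fin n) (ZMod 2) × Matrix (Fin n) (Fin m) (ZMod 2)) : Prop :=
  ∀ i j, (i, j) ≠ (p, q) → (BC.1 * BC.2) i j = M i j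

/-- The standard basis vector `e_p` is in the column space of `B`; equivalently, row `p` of `B` is
not a linear combination of the other rows. -/
def FreeAt {m n : ℕ} (p : Fin m) (B : Matrix (Fin m) (Fin n) (ZMod 2)) : Prop :=
  ∃ u, B *ᵥ u = Pi.single p 1

/-- The functional used here separates `e_p` from the column space of `B`. -/
lemma exists_row_eq_of_not_freeAt {m n : ℕ} (p : Fin m) (B : Matrix (Fin m) (Fin n) (ZMod 2))
    (h : ¬ FreeAt p B) : ∃ y : Fin m → ZMod 2, B p = ∑ i ∈ Finset.univ.erase p, y i • B i := by
  have hmem : (Pi.single p 1 : Fin m → ZMod 2) ∉ LinearMap.range B.mulVecLin := by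
    rintro ⟨u, hu⟩
    exact h ⟨u, hu⟩
  obtain ⟨f, hf, hle⟩ := Submodule.exists_le_ker_of_notMem hmem
  have hfp : f (Pi.single p 1) = 1 := by
    generalize f (Pi.single p 1) = t at hf
    revert hf; revert t; decide
  have hexp : ∀ v : Fin m → ZMod 2, f v = ∑ i, v i * f (Pi.single i 1) := by
    intro v
    conv_lhs => rw [pi_eq_sum_univ' v]
    simp [map_sum, smul_eq_mul]
  refine ⟨fun i => f (Pi.single i 1), ?_⟩
  ext k
  have h0 : f (B *ᵥ Pi.single k 1) = 0 := hle ⟨_, rfl⟩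
  rw [hexp, ← Finset.add_sum_erase _ _ (Finset.mem_univ p), hfp] at h0
  simp only [mulVec_single_one, col_apply, mul_one] at h0
  have h1 := eq_neg_of_add_eq_zero_left h0
  rw [CharTwo.neg_eq] at h1
  rw [h1, Finset.sum_apply]
  exact Finset.sum_congr rfl fun i _ => mul_comm _ _

lemma two_pow_le_card_ker {m n : ℕ} (C : Matrix (Fin n) (Fin m) (ZMod 2)) :
    2 ^ n ≤ (Finset.univ.filter fun w : Fin n → ZMod 2 => w ᵥ* C = 0).card * 2 ^ m := by
  classical
  -- All fibres of `w ↦ w C` have at most as many elements as the kernel.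
  have h := Finset.card_le_mul_card_image_of_maps_to
    (s := (Finset.univ : Finset (Fin n → ZMod 2))) (t := (Finset.univ : Finset (Fin m → ZMod 2)))
    (f := fun w => w ᵥ* C) (by simp)
    (Finset.univ.filter fun w : Fin n → ZMod 2 => w ᵥ* C = 0).card (by
      intro b _
      by_cases hb : ∃ w₀, w₀ ᵥ* C = b
      · obtain ⟨w₀, hw₀⟩ := hb
        apply Finset.card_le_card_of_injOn (fun w => w - w₀)
        · intro w hw
          have hw' : w ᵥ* C = b := by simpa using hw
          simp [sub_vecMul, hw', hw₀]
        · intro a _ b _ hab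
          simpa using hab
      · rw [Finset.filter_false_of_mem (fun w _ hw => hb ⟨w, hw⟩)]
        simp)
  simpa [Finset.card_univ, ZMod.card] using h

open Classical in
/-- Flipping the entry `(p, q)` by adding a solution of `B u = e_p` to column `q` of `C`. -/
lemma card_free_le {m n : ℕ} (p q : Fin m) (M : Matrix (Fin m) (Fin m) (ZMod 2)) (a : ZMod 2) :
    (Finset.univ.filter fun BC : Matrix (Fin m) (Fin n) (ZMod 2) × Matrix (Fin n) (Fin m) (ZMod 2) =>
      (ConsistentOff p q M BC ∧ (BC.1 * BC.2) p q = a) ∧ FreeAt p BC.1).card ≤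
    (Finset.univ.filter fun BC : Matrix (Fin m) (Fin n) (ZMod 2) × Matrix (Fin n) (Fin m) (ZMod 2) =>
      (ConsistentOff p q M BC ∧ (BC.1 * BC.2) p q = a + 1) ∧ FreeAt p BC.1).card := by
  have hu : ∀ B : Matrix (Fin m) (Fin n) (ZMod 2), ∃ u, FreeAt p B → B *ᵥ u = Pi.single p 1 := by
    intro B
    by_cases h : FreeAt p B
    · obtain ⟨u, hu⟩ := h
      exact ⟨u, fun _ => hu⟩
    · exact ⟨0, fun h' => absurd h' h⟩
  choose u hu using hu
  apply Finset.card_le_card_of_injOn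
    (fun BC => (BC.1, BC.2 + vecMulVec (u BC.1) (Pi.single q 1)))
  · rintro ⟨B, C⟩ h
    simp only [Finset.coe_filter, Finset.mem_univ, true_and, Set.mem_ofPred_eq] at h ⊢
    obtain ⟨⟨hc, ha⟩, hf⟩ := h
    have hprod : B * (C + vecMulVec (u B) (Pi.single q 1)) =
        B * C + vecMulVec (Pi.single p 1) (Pi.single q 1) := by
      rw [Matrix.mul_add, mul_vecMulVec, hu B hf]
    refine ⟨⟨?_, ?_⟩, hf⟩
    · intro i j hij
      have hz : vecMulVec (Pi.single p (1 : ZMod 2)) (Pi.single q 1) i j = 0 := by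
        rw [vecMulVec_apply]
        by_cases hi : i = p
        · have hj : j ≠ q := fun hj => hij (by rw [hi, hj])
          simp [hj]
        · simp [hi]
      change (B * (C + vecMulVec (u B) (Pi.single q 1))) i j = M i j
      rw [hprod, Matrix.add_apply, hz, add_zero]
      exact hc i j hij
    · rw [hprod, Matrix.add_apply, ha]
      simp [vecMulVec_apply]
  · rintro ⟨B, C⟩ _ ⟨B', C'⟩ _ h
    simp only [Prod.mk.injEq] at h
    obtain ⟨rfl, h⟩ := h
    rw [add_left_inj] at h
    rw [h]

open Classical in
/-- Double counting of the triples `(B, C, w)` in which `B` is not free at `p` and `w C = 0`. -/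
lemma card_not_free_mul_le {m n : ℕ} (p q : Fin m) (M : Matrix (Fin m) (Fin m) (ZMod 2)) :
    (Finset.univ.filter fun BC : Matrix (Fin m) (Fin n) (ZMod 2) × Matrix (Fin n) (Fin m) (ZMod 2) =>
      ConsistentOff p q M BC ∧ ¬ FreeAt p BC.1).card * 2 ^ n ≤
    (Finset.univ.filter fun BC : Matrix (Fin m) (Fin n) (ZMod 2) × Matrix (Fin n) (Fin m) (ZMod 2) =>
      ConsistentOff p q M BC).card * 2 ^ m * 2 ^ m := by
  set bad := Finset.univ.filter
    fun BC : Matrix (Fin m) (Fin n) (ZMod 2) × Matrix (Fin n) (Fin m) (ZMod 2) =>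
      ConsistentOff p q M BC ∧ ¬ FreeAt p BC.1 with hbad
  set all := Finset.univ.filter
    fun BC : Matrix (Fin m) (Fin n) (ZMod 2) × Matrix (Fin n) (Fin m) (ZMod 2) =>
      ConsistentOff p q M BC with hall
  have hy : ∀ B : Matrix (Fin m) (Fin n) (ZMod 2), ∃ y : Fin m → ZMod 2,
      ¬ FreeAt p B → B p = ∑ i ∈ Finset.univ.erase p, y i • B i := by
    intro B
    by_cases h : FreeAt p B
    · exact ⟨0, fun h' => absurd h h'⟩
    · obtain ⟨y, hy⟩ := exists_row_eq_of_not_freeAt p B h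
      exact ⟨y, fun _ => hy⟩
  choose y hy using hy
  let ker : Matrix (Fin m) (Fin n) (ZMod 2) × Matrix (Fin n) (Fin m) (ZMod 2) →
      Finset (Fin n → ZMod 2) := fun BC => Finset.univ.filter fun w => w ᵥ* BC.2 = 0
  have hlow : bad.card * 2 ^ n ≤ (bad.sigma ker).card * 2 ^ m := by
    rw [Finset.card_sigma, Finset.sum_mul, ← smul_eq_mul]
    exact Finset.card_nsmul_le_sum _ _ _ fun BC _ => two_pow_le_card_ker BC.2
  have hup : (bad.sigma ker).card ≤ all.card * 2 ^ m := by
    have hcard : (all ×ˢ (Finset.univ : Finset (Fin m → ZMod 2))).card = all.card * 2 ^ m := by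
      simp [Finset.card_product, ZMod.card]
    rw [← hcard]
    apply Finset.card_le_card_of_injOn
      (fun t => ((t.1.1.updateRow p (t.1.1 p + t.2), t.1.2), y t.1.1))
    · rintro ⟨⟨B, C⟩, w⟩ h
      simp only [Finset.coe_sigma, Set.mem_sigma_iff, Finset.mem_coe, hbad, ker,
        Finset.mem_filter, Finset.mem_univ, true_and] at h
      obtain ⟨⟨hc, -⟩, hw⟩ := h
      have hprod : B.updateRow p (B p + w) * C = B * C := by
        rw [updateRow_mul, add_vecMul, hw, add_zero]
        ext i j
        by_cases hi : i = p
        · subst hi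
          simp [Matrix.mul_apply, vecMul, dotProduct]
        · simp [hi]
      simp only [Finset.coe_product, Set.mem_prod, Finset.mem_coe, hall, Finset.mem_filter,
        Finset.mem_univ, true_and, and_true]
      intro i j hij
      change (B.updateRow p (B p + w) * C) i j = M i j
      rw [hprod]
      exact hc i j hij
    · rintro ⟨⟨B, C⟩, w⟩ h ⟨⟨B', C'⟩, w'⟩ h' heq
      simp only [Finset.coe_sigma, Set.mem_sigma_iff, Finset.mem_coe, hbad, ker,
        Finset.mem_filter, Finset.mem_univ, true_and] at h h'
      simp only [Prod.mk.injEq] at heq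
      obtain ⟨⟨hB, rfl⟩, hyy⟩ := heq
      have hrow : ∀ i, i ≠ p → B i = B' i := by
        intro i hi
        have := congrFun hB i
        simpa [updateRow_ne hi] using this
      have hp : B p = B' p := by
        rw [hy B h.1.2, hy B' h'.1.2, hyy]
        refine Finset.sum_congr rfl fun i hi => ?_
        rw [hrow i (Finset.ne_of_mem_erase hi)]
      have hBB : B = B' := by
        funext i
        by_cases hi : i = p
        · rw [hi, hp]
        · exact hrow i hi
      subst hBB
      have hw : w = w' := by
        have := congrFun hB p
        simpa using this
      rw [hw]
  calc bad.card * 2 ^ n ≤ (bad.sigma ker).card * 2 ^ m := hlow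
    _ ≤ all.card * 2 ^ m * 2 ^ m := Nat.mul_le_mul_right _ hup


/-- For sufficiently large `m`: fix `p q : Fin m` and an `m × m` matrix `M` over `𝔽₂`
(whose `(p,q)` entry is regarded as undefined).  For `a : 𝔽₂`, let `N a` be the number
of pairs `(B, C)` of an `m × 7m` and a `7m × m` matrix over `𝔽₂` such that `B * C`
agrees with `M` on every position other than `(p,q)` and has value `a` at `(p,q)`.
If `N 0 + N 1 > 0`, then `N 1 / (N 0 + N 1)` lies strictly between
`1/2 - 1/m` and `1/2 + 1/m`. -/
theorem almost_uniform_entry_of_random_factorization :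
    ∃ m₀ : ℕ, ∀ m : ℕ, m₀ ≤ m →
    ∀ (p q : Fin m) (M : Matrix (Fin m) (Fin m) (ZMod 2)),
    ∀ N : ZMod 2 → ℕ,
    (∀ a : ZMod 2, N a =
      {BC : Matrix (Fin m) (Fin (7 * m)) (ZMod 2) ×
            Matrix (Fin (7 * m)) (Fin m) (ZMod 2) |
        (∀ i j, (i, j) ≠ (p, q) → (BC.1 * BC.2) i j = M i j) ∧
          (BC.1 * BC.2) p q = a}.ncard) →
    0 < N 0 + N 1 →
      1 / 2 - 1 / (m : ℝ) < (N 1 : ℝ) / ((N 0 : ℝ) + (N 1 : ℝ)) ∧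
      (N 1 : ℝ) / ((N 0 : ℝ) + (N 1 : ℝ)) < 1 / 2 + 1 / (m : ℝ) := by
  classical
  refine ⟨0, fun m _ p q M N hN hpos => ?_⟩
  have hm : 0 < m := p.pos
  set free : ZMod 2 → ℕ := fun a => (Finset.univ.filter
    fun BC : Matrix (Fin m) (Fin (7 * m)) (ZMod 2) × Matrix (Fin (7 * m)) (Fin m) (ZMod 2) =>
      (ConsistentOff p q M BC ∧ (BC.1 * BC.2) p q = a) ∧ FreeAt p BC.1).card with hfree
  set bad : ZMod 2 → ℕ := fun a => (Finset.univ.filter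
    fun BC : Matrix (Fin m) (Fin (7 * m)) (ZMod 2) × Matrix (Fin (7 * m)) (Fin m) (ZMod 2) =>
      (ConsistentOff p q M BC ∧ (BC.1 * BC.2) p q = a) ∧ ¬ FreeAt p BC.1).card with hbad
  have hsplit : ∀ a, N a = free a + bad a := by
    intro a
    have h := Finset.card_filter_add_card_filter_not (s := Finset.univ.filter
      fun BC : Matrix (Fin m) (Fin (7 * m)) (ZMod 2) × Matrix (Fin (7 * m)) (Fin m) (ZMod 2) =>
        ConsistentOff p q M BC ∧ (BC.1 * BC.2) p q = a) (fun BC => FreeAt p BC.1)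
    rw [Finset.filter_filter, Finset.filter_filter] at h
    rw [hN a]
    refine Eq.trans ?_ h.symm
    rw [← Set.ncard_coe_finset]
    congr 1
    ext BC
    simp [ConsistentOff]
  have h01 : ∀ t : ZMod 2, ¬ t = 0 ↔ t = 1 := by decide
  have hfree_eq : free 0 = free 1 := by
    apply le_antisymm
    · simpa using card_free_le (n := 7 * m) p q M 0
    · have h := card_free_le (n := 7 * m) p q M 1
      rwa [show (1 + 1 : ZMod 2) = 0 from rfl] at h
  have hbad_sum : (Finset.univ.filter
      fun BC : Matrix (Fin m) (Fin (7 * m)) (ZMod 2) × Matrix (Fin (7 * m)) (Fin m) (ZMod 2) =>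
        ConsistentOff p q M BC ∧ ¬ FreeAt p BC.1).card = bad 0 + bad 1 := by
    rw [← Finset.card_filter_add_card_filter_not (fun BC => (BC.1 * BC.2) p q = 0),
      Finset.filter_filter, Finset.filter_filter]
    simp only [h01, hbad, and_right_comm]
  have hall_sum : (Finset.univ.filter
      fun BC : Matrix (Fin m) (Fin (7 * m)) (ZMod 2) × Matrix (Fin (7 * m)) (Fin m) (ZMod 2) =>
        ConsistentOff p q M BC).card = N 0 + N 1 := by
    rw [← Finset.card_filter_add_card_filter_not (fun BC => FreeAt p BC.1),
      Finset.filter_filter, Finset.filter_filter, hbad_sum, hsplit 0, hsplit 1]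
    have : (Finset.univ.filter
      fun BC : Matrix (Fin m) (Fin (7 * m)) (ZMod 2) × Matrix (Fin (7 * m)) (Fin m) (ZMod 2) =>
        ConsistentOff p q M BC ∧ FreeAt p BC.1).card = free 0 + free 1 := by
      rw [← Finset.card_filter_add_card_filter_not (fun BC => (BC.1 * BC.2) p q = 0),
        Finset.filter_filter, Finset.filter_filter]
      simp only [h01, hfree, and_right_comm]
    omega
  have hkey : (bad 0 + bad 1) * 2 ^ (5 * m) ≤ N 0 + N 1 := by
    have h := card_not_free_mul_le (n := 7 * m) p q M
    rw [hbad_sum, hall_sum] at h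
    have hpow : 2 ^ (7 * m) = 2 ^ (5 * m) * (2 ^ m * 2 ^ m) := by
      rw [← pow_add, ← pow_add]; congr 1; ring
    rw [hpow, ← mul_assoc, mul_assoc (N 0 + N 1)] at h
    exact Nat.le_of_mul_le_mul_right h (by positivity)
  have hlt : m < 2 ^ (5 * m) :=
    Nat.lt_two_pow_self.trans_le (Nat.pow_le_pow_right (by norm_num) (by omega))
  have hsmall : (bad 0 + bad 1) * m ≤ N 0 + N 1 :=
    (Nat.mul_le_mul_left _ hlt.le).trans hkey
  have hs0 : (N 0 : ℝ) = free 0 + bad 0 := by exact_mod_cast hsplit 0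
  have hs1 : (N 1 : ℝ) = free 0 + bad 1 := by rw [hfree_eq]; exact_mod_cast hsplit 1
  have hmR : (0 : ℝ) < m := by exact_mod_cast hm
  have hposR : (0 : ℝ) < (N 0 : ℝ) + N 1 := by exact_mod_cast hpos
  have hsmallR : ((bad 0 : ℝ) + bad 1) * m ≤ (N 0 : ℝ) + N 1 := by exact_mod_cast hsmall
  have hb0 : (0 : ℝ) ≤ bad 0 * m := by positivity
  have hb1 : (0 : ℝ) ≤ bad 1 * m := by positivity
  have hdiff : (N 1 : ℝ) - N 0 = bad 1 - bad 0 := by rw [hs0, hs1]; ring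
  have habs : |((N 1 : ℝ) - N 0) * m| < 2 * ((N 0 : ℝ) + N 1) := by
    rw [hdiff, abs_lt]
    constructor <;> nlinarith
  have hratio : (N 1 : ℝ) / ((N 0 : ℝ) + N 1) - 1 / 2 =
      (((N 1 : ℝ) - N 0) * m) / (2 * ((N 0 : ℝ) + N 1)) * (1 / m) := by
    field_simp
    ring
  obtain ⟨hl, hr⟩ := abs_lt.mp habs
  have h2 : (0 : ℝ) < 2 * ((N 0 : ℝ) + N 1) := by positivity
  have hinv : (0 : ℝ) < 1 / m := by positivity
  have hl' : -1 < (((N 1 : ℝ) - N 0) * m) / (2 * ((N 0 : ℝ) + N 1)) := by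
    rw [lt_div_iff₀ h2]; linarith
  have hr' : (((N 1 : ℝ) - N 0) * m) / (2 * ((N 0 : ℝ) + N 1)) < 1 := by
    rw [div_lt_iff₀ h2]; linarith
  constructor
  · have := mul_lt_mul_of_pos_right hl' hinv
    linarith
  · have := mul_lt_mul_of_pos_right hr' hinv
    linarith
end

section
/- There exists n₀ such that for every n ≥ n₀ there exist matrices B of dimension n × ⌈14·log₂ n⌉ and C of dimension ⌈14·log₂ n⌉ × n over 𝔽₂ such that the product A = B·C satisfies: (i) the number of positions (i,j) with A(i,j) = 1 is at least 0.3·n²; and (ii) A contains no t×t all-ones submatrix, where t = ⌈2·log₂ n⌉. -/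
/-!
The matrices `B` and `D = Cᵀ` are chosen uniformly at random; write `m` for the inner dimension,
so the entries of `A = B * C` are the inner products of rows of `B` and `D` in `𝔽₂ᵐ`.

For a fixed `t × t` submatrix, conditioning on the rows of `B` makes the rows of `D` independent,
so the probability of being all-ones is controlled by the `t`-th moment of the number `N(X)` of
common solutions `y` of `x ⬝ᵥ y = 1`, where `x` ranges over the `t` rows of `X`. Rows are added one
at a time: a new row in the span of the previous `k` rows (at most `2 ^ k` choices) does not
increase `N`, and any other row at least halves it. Each step therefore multiplies the moment by at
most `2 ^ k + 2 ^ (m - t)` (`moment_step`), and since `2 t ≤ m` the all-ones probability is at most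
`2 ^ (t - t²)` (`card_allones`). The same recursion with right-hand side `0` and `t = 1` shows that
an entry is zero with probability at most `1/2 + 2⁻ᵐ` (`card_zero_entry`).

As `n² ≤ 2 ^ t`, there are at most `n ^ (2 t) / t!² ≤ 2 ^ (t²) / t!²` submatrices, so the expected
number of all-ones ones is at most `2 ^ t / t!² ≤ 1/10`. The sum of this expectation and the
expected fraction of zeros is below `0.7`, hence some outcome has no all-ones submatrix and fewer
than `0.7 n²` zeros (`exists_pair`).
-/

open Finset

/-- The vectors `y` over `𝔽₂` whose inner product with every row of `X` equals `c`. -/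
def sols {m k : ℕ} (c : ZMod 2) (X : Fin k → Fin m → ZMod 2) : Finset (Fin m → ZMod 2) :=
  {y | ∀ i, X i ⬝ᵥ y = c}

lemma sols_cons {m k : ℕ} (c : ZMod 2) (x : Fin m → ZMod 2) (X : Fin k → Fin m → ZMod 2) :
    sols c (Fin.cons x X : Fin (k + 1) → Fin m → ZMod 2) = {y ∈ sols c X | x ⬝ᵥ y = c} := by
  ext y
  simp [sols, Fin.forall_fin_succ, and_comm]

/-- A vector `x` vanishing on the common kernel of the rows of `X` lies in their span. -/
lemma mem_span_of_kernel {m k : ℕ} (X : Fin k → Fin m → ZMod 2) (x : Fin m → ZMod 2)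
    (h : ∀ z, (∀ i, X i ⬝ᵥ z = 0) → x ⬝ᵥ z = 0) :
    ∃ a : Fin k → ZMod 2, ∑ i, a i • X i = x := by
  have key := mem_span_of_iInf_ker_le_ker (𝕜 := ZMod 2)
    (L := fun i => dotProductBilin (ZMod 2) (ZMod 2) (X i))
    (K := dotProductBilin (ZMod 2) (ZMod 2) x)
    (by
      intro z hz
      simp only [Submodule.mem_iInf, LinearMap.mem_ker] at hz ⊢
      exact h z hz)
  obtain ⟨a, ha⟩ := (Submodule.mem_span_range_iff_exists_fun (ZMod 2)).1 key
  refine ⟨a, ?_⟩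
  funext j
  have := LinearMap.congr_fun ha (Pi.single j 1)
  simpa [LinearMap.sum_apply, dotProductBilin] using this

/-- At most `2 ^ k` vectors lie in the span of the `k` rows of `X`. -/
lemma card_span_le {m k : ℕ} (X : Fin k → Fin m → ZMod 2) :
    #{x : Fin m → ZMod 2 | ∀ z, (∀ i, X i ⬝ᵥ z = 0) → x ⬝ᵥ z = 0} ≤ 2 ^ k := by
  have : ({x : Fin m → ZMod 2 | ∀ z, (∀ i, X i ⬝ᵥ z = 0) → x ⬝ᵥ z = 0} : Finset _) ⊆
      (univ : Finset (Fin k → ZMod 2)).image (fun a => ∑ i, a i • X i) := by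
    intro x hx
    obtain ⟨a, ha⟩ := mem_span_of_kernel X x (by simpa using hx)
    exact mem_image.2 ⟨a, mem_univ _, ha⟩
  refine (card_le_card this).trans (card_image_le.trans ?_)
  simp [ZMod.card]

/-- A row outside the span of the earlier rows at least halves the solution set: translation by
a kernel vector `z` of `X` with `x ⬝ᵥ z = 1` changes the value of `x ⬝ᵥ y`. -/
lemma two_mul_card_sols_cons {m k : ℕ} (c : ZMod 2) (x : Fin m → ZMod 2)
    (X : Fin k → Fin m → ZMod 2) (z : Fin m → ZMod 2) (hz : ∀ i, X i ⬝ᵥ z = 0)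
    (hx : x ⬝ᵥ z ≠ 0) :
    2 * #(sols c (Fin.cons x X : Fin (k + 1) → Fin m → ZMod 2)) ≤ #(sols c X) := by
  rw [sols_cons, ← card_filter_add_card_filter_not (s := sols c X) (fun y => x ⬝ᵥ y = c), two_mul]
  refine Nat.add_le_add_left (card_le_card_of_injOn (fun y => y + z) ?_ ?_) _
  · intro y hy
    simp only [sols, coe_filter, mem_filter, mem_univ, true_and, Set.mem_ofPred_eq] at hy ⊢
    simpa [dotProduct_add, hz, hy.2] using And.intro hy.1 hx
  · intro a _ b _ h
    exact add_right_cancel h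

/-- The recursion for the `t`-th moment of the size of the solution set, in the number of rows. -/
lemma moment_step {m k : ℕ} (c : ZMod 2) (t : ℕ) :
    (∑ X : Fin (k + 1) → Fin m → ZMod 2, #(sols c X) ^ t) * 2 ^ t ≤
      (∑ X : Fin k → Fin m → ZMod 2, #(sols c X) ^ t) * (2 ^ (k + t) + 2 ^ m) := by
  rw [← (Fin.consEquiv (fun _ : Fin (k + 1) => Fin m → ZMod 2)).sum_comp, Fintype.sum_prod_type,
    sum_comm, sum_mul, sum_mul]
  refine sum_le_sum fun X _ => ?_
  rw [sum_mul]
  set S : Finset (Fin m → ZMod 2) := {x | ∀ z, (∀ i, X i ⬝ᵥ z = 0) → x ⬝ᵥ z = 0} with hS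
  have hle : ∀ x : Fin m → ZMod 2,
      #(sols c (Fin.cons x X : Fin (k + 1) → Fin m → ZMod 2)) ^ t * 2 ^ t ≤
        #(sols c X) ^ t * ((if x ∈ S then 2 ^ t else 0) + 1) := by
    intro x
    by_cases hx : x ∈ S
    · have h1 : #(sols c (Fin.cons x X : Fin (k + 1) → Fin m → ZMod 2)) ≤ #(sols c X) := by
        rw [sols_cons]; exact card_filter_le _ _
      rw [if_pos hx]
      exact Nat.mul_le_mul (Nat.pow_le_pow_left h1 t) (Nat.le_succ _)
    · have hx' := hx
      simp only [hS, mem_filter, mem_univ, true_and, not_forall] at hx'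
      obtain ⟨z, hz, hxz⟩ := hx'
      rw [if_neg hx, zero_add, mul_one, ← mul_pow, mul_comm]
      exact Nat.pow_le_pow_left (two_mul_card_sols_cons c x X z hz hxz) t
  refine (sum_le_sum fun x _ => hle x).trans ?_
  rw [← mul_sum, sum_add_distrib, ← sum_filter, filter_mem_eq_inter, univ_inter, sum_const]
  refine Nat.mul_le_mul_left _ (Nat.add_le_add ?_ ?_)
  · rw [pow_add, smul_eq_mul]
    exact Nat.mul_le_mul_right _ (card_span_le X)
  · simp [ZMod.card]

lemma moment_bound {m : ℕ} (c : ZMod 2) (t k : ℕ) :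
    (∑ X : Fin k → Fin m → ZMod 2, #(sols c X) ^ t) * 2 ^ (t * k) ≤
      (2 ^ m) ^ t * ∏ i ∈ range k, (2 ^ (i + t) + 2 ^ m) := by
  induction k with
  | zero => simp [sols, ZMod.card]
  | succ k ih =>
    rw [prod_range_succ, ← mul_assoc, Nat.mul_succ, pow_add, mul_comm (2 ^ (t * k)), ← mul_assoc]
    calc _ ≤ (∑ X : Fin k → Fin m → ZMod 2, #(sols c X) ^ t) * (2 ^ (k + t) + 2 ^ m)
            * 2 ^ (t * k) := Nat.mul_le_mul_right _ (moment_step c t)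
      _ = (∑ X : Fin k → Fin m → ZMod 2, #(sols c X) ^ t) * 2 ^ (t * k)
            * (2 ^ (k + t) + 2 ^ m) := by ring
      _ ≤ _ := Nat.mul_le_mul_right _ ih

/-- The pairs `(B, D)` of `n`-tuples of vectors such that `B * Dᵀ` is constantly `c` on `I × J`. -/
def constOn {m n : ℕ} (c : ZMod 2) (I J : Finset (Fin n)) :
    Finset ((Fin n → Fin m → ZMod 2) × (Fin n → Fin m → ZMod 2)) :=
  {p | ∀ i ∈ I, ∀ j ∈ J, p.1 i ⬝ᵥ p.2 j = c}

/-- Only the `I`-part of `B` and the `J`-part of `D` are constrained; the others are free. -/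
lemma card_constOn {m n : ℕ} (c : ZMod 2) (I J : Finset (Fin n)) :
    #(constOn (m := m) c I J) * (2 ^ m) ^ #I * (2 ^ m) ^ #J =
      (∑ X : Fin #I → Fin m → ZMod 2, #(sols c X) ^ #J) * (2 ^ m) ^ (2 * n) := by
  have hV : Fintype.card (Fin m → ZMod 2) = 2 ^ m := by simp [ZMod.card]
  have hIn : #I ≤ n := by simpa using card_le_univ I
  have hJn : #J ≤ n := by simpa using card_le_univ J
  let e : Fin #I ≃ {i // i ∈ I} := I.equivFin.symm
  have h1 : ∀ B : Fin n → Fin m → ZMod 2,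
      #{D : Fin n → Fin m → ZMod 2 | ∀ i ∈ I, ∀ j ∈ J, B i ⬝ᵥ D j = c} =
        #(sols c fun i => B (e i)) ^ #J * (2 ^ m) ^ (n - #J) := by
    intro B
    have : ({D : Fin n → Fin m → ZMod 2 | ∀ i ∈ I, ∀ j ∈ J, B i ⬝ᵥ D j = c} : Finset _) =
        Fintype.piFinset fun j => if j ∈ J then sols c fun i => B (e i) else univ := by
      ext D
      simp only [mem_filter, mem_univ, true_and, Fintype.mem_piFinset]
      constructor
      · intro h j
        split_ifs with hj
        · simp only [sols, mem_filter, mem_univ, true_and]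
          exact fun i => h _ (e i).2 j hj
        · exact mem_univ _
      · intro h i hi j hj
        have := h j
        rw [if_pos hj] at this
        simp only [sols, mem_filter, mem_univ, true_and] at this
        simpa using this (e.symm ⟨i, hi⟩)
    rw [this, Fintype.card_piFinset]
    simp_rw [apply_ite Finset.card]
    rw [prod_ite, prod_const, prod_const, card_univ, hV, filter_mem_eq_inter, univ_inter]
    congr 2
    rw [filter_not, filter_mem_eq_inter, univ_inter, card_sdiff_of_subset (subset_univ _)]
    simp
  have h2 : #(constOn (m := m) c I J) =
      ∑ B : Fin n → Fin m → ZMod 2, #(sols c fun i => B (e i)) ^ #J * (2 ^ m) ^ (n - #J) := by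
    rw [← sum_congr rfl fun B _ => h1 B]
    simp_rw [card_filter, constOn]
    rw [card_filter, Fintype.sum_prod_type]
  have h3 : ∑ B : Fin n → Fin m → ZMod 2, #(sols c fun i => B (e i)) ^ #J =
      (∑ X : Fin #I → Fin m → ZMod 2, #(sols c X) ^ #J) * (2 ^ m) ^ (n - #I) := by
    rw [← (Equiv.piEquivPiSubtypeProd (fun i => i ∈ I)
      (fun _ => Fin m → ZMod 2)).symm.sum_comp, Fintype.sum_prod_type,
      ← (Equiv.arrowCongr e (Equiv.refl (Fin m → ZMod 2))).sum_comp, sum_mul]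
    refine sum_congr rfl fun X _ => ?_
    have : ∀ Y : {i // i ∉ I} → Fin m → ZMod 2, (fun i : Fin #I =>
        (Equiv.piEquivPiSubtypeProd (fun i => i ∈ I) (fun _ => Fin m → ZMod 2)).symm
          ((Equiv.arrowCongr e (Equiv.refl (Fin m → ZMod 2))) X, Y) (e i)) = X := by
      intro Y
      funext i
      simp [Equiv.piEquivPiSubtypeProd]
    simp_rw [this]
    rw [sum_const, card_univ, Fintype.card_fun, hV, Fintype.card_subtype_compl]
    simp [mul_comm]
  rw [h2, ← sum_mul, h3]
  have e1 : (2 ^ m) ^ (2 * n) = (2 ^ m) ^ (n - #I) * (2 ^ m) ^ #I *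
      ((2 ^ m) ^ (n - #J) * (2 ^ m) ^ #J) := by
    rw [← pow_add, ← pow_add, ← pow_add, Nat.sub_add_cancel hIn, Nat.sub_add_cancel hJn, two_mul]
  rw [e1]
  ring

/-- A single entry vanishes with probability at most `1/2 + 2⁻ᵐ`. -/
lemma card_zero_entry {m n : ℕ} (i j : Fin n) :
    (#(constOn (m := m) 0 {i} {j}) : ℝ) ≤ (1 / 2 + 1 / 2 ^ m) * (2 ^ m) ^ (2 * n) := by
  have h := card_constOn (m := m) 0 {i} {j}
  have hb := moment_bound (m := m) 0 1 1
  simp only [card_singleton, pow_one, mul_one, prod_range_one, zero_add] at h hb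
  have h' : (#(constOn (m := m) 0 {i} {j}) : ℝ) * 2 ^ m * 2 ^ m =
    (∑ X : Fin 1 → Fin m → ZMod 2, (#(sols 0 X) : ℝ)) * (2 ^ m) ^ (2 * n) := by exact_mod_cast h
  have hb' : (∑ X : Fin 1 → Fin m → ZMod 2, (#(sols 0 X) : ℝ)) * 2 ≤ 2 ^ m * (2 + 2 ^ m) := by
    exact_mod_cast hb
  have hq : (0 : ℝ) < 2 ^ m := by positivity
  set q : ℝ := 2 ^ m
  have hQ : (0 : ℝ) ≤ q ^ (2 * n) := by positivity
  rw [← mul_le_mul_iff_of_pos_right (mul_pos hq hq), ← mul_assoc, h']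
  calc _ ≤ (q * (2 + q) / 2) * q ^ (2 * n) := by
        apply mul_le_mul_of_nonneg_right _ hQ; linarith
    _ = _ := by field_simp; ring

/-- A fixed `t × t` submatrix is all-ones with probability at most `2 ^ t / 2 ^ (t * t)`. -/
lemma card_allones {m n t : ℕ} (htm : 2 * t ≤ m) (I J : Finset (Fin n)) (hI : #I = t)
    (hJ : #J = t) :
    (#(constOn (m := m) 1 I J) : ℝ) * 2 ^ (t * t) ≤ 2 ^ t * (2 ^ m) ^ (2 * n) := by
  have h := card_constOn (m := m) 1 I J
  rw [hI, hJ] at h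
  have hb := moment_bound (m := m) 1 t t
  have hp : ∏ i ∈ range t, (2 ^ (i + t) + 2 ^ m) ≤ (2 * 2 ^ m) ^ t := by
    refine (prod_le_pow_card _ _ (2 * 2 ^ m) fun i hi => ?_).trans_eq (by simp)
    have : 2 ^ (i + t) ≤ 2 ^ m :=
      Nat.pow_le_pow_right (by norm_num) (by have := mem_range.1 hi; omega)
    omega
  have hb2 := hb.trans (Nat.mul_le_mul_left _ hp)
  set E := ∑ X : Fin t → Fin m → ZMod 2, #(sols 1 X) ^ t
  have hq : 0 < (2 ^ m) ^ t * (2 ^ m) ^ t := by positivity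
  have : #(constOn (m := m) 1 I J) * 2 ^ (t * t) ≤ 2 ^ t * (2 ^ m) ^ (2 * n) := by
    refine Nat.le_of_mul_le_mul_right ?_ hq
    calc _ = #(constOn (m := m) 1 I J) * (2 ^ m) ^ t * (2 ^ m) ^ t * 2 ^ (t * t) := by ring
      _ = E * 2 ^ (t * t) * (2 ^ m) ^ (2 * n) := by rw [h]; ring
      _ ≤ (2 ^ m) ^ t * (2 * 2 ^ m) ^ t * (2 ^ m) ^ (2 * n) := Nat.mul_le_mul_right _ hb2
      _ = _ := by rw [mul_pow 2 (2 ^ m)]; ring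
  exact_mod_cast this

lemma ten_mul_two_pow_le {t : ℕ} (ht : 4 ≤ t) : 10 * 2 ^ t ≤ (t.factorial) ^ 2 := by
  induction t, ht using Nat.le_induction with
  | base => decide
  | succ t ht ih =>
    rw [Nat.factorial_succ, mul_pow, pow_succ]
    have : 2 ≤ (t + 1) ^ 2 := by nlinarith
    calc 10 * (2 ^ t * 2) = 2 * (10 * 2 ^ t) := by ring
      _ ≤ _ := Nat.mul_le_mul this ih

/-- The combinatorial core, with the logarithms replaced by the inequalities they supply. -/
lemma exists_pair {m n t : ℕ} (ht : 4 ≤ t) (htm : 2 * t ≤ m) (hn : 0 < n)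
    (hnt : n ^ 2 ≤ 2 ^ t) :
    ∃ B D : Fin n → Fin m → ZMod 2,
      (0.3 * (n : ℝ) ^ 2 ≤ #{p : Fin n × Fin n | B p.1 ⬝ᵥ D p.2 = 1}) ∧
      ∀ I J : Finset (Fin n), #I = t → #J = t → ¬ ∀ i ∈ I, ∀ j ∈ J, B i ⬝ᵥ D j = 1 := by
  let Ω := (Fin n → Fin m → ZMod 2) × (Fin n → Fin m → ZMod 2)
  let P : Finset (Finset (Fin n)) := powersetCard t univ
  let zeros : Ω → ℕ := fun ω => #{p : Fin n × Fin n | ω.1 p.1 ⬝ᵥ ω.2 p.2 = 0}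
  let bad : Ω → ℕ := fun ω => #{p ∈ P ×ˢ P | ∀ i ∈ p.1, ∀ j ∈ p.2, ω.1 i ⬝ᵥ ω.2 j = 1}
  set Q : ℝ := (2 ^ m) ^ (2 * n) with hQdef
  have hQ : 0 < Q := by positivity
  have hΩ : (Fintype.card Ω : ℝ) = Q := by
    simp [Ω, ZMod.card, hQdef, two_mul, pow_add]
  have hn' : (0 : ℝ) < n := by exact_mod_cast hn
  -- Total number of zero entries, by double counting.
  have hZ : (∑ ω : Ω, (zeros ω : ℝ)) ≤ n ^ 2 * ((1 / 2 + 1 / 2 ^ m) * Q) := by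
    have : ∑ ω : Ω, zeros ω =
        ∑ p : Fin n × Fin n, #(constOn (m := m) 0 {p.1} {p.2}) := by
      simp_rw [zeros, constOn, card_filter]
      rw [sum_comm]
      simp [Ω]
    have h2 : (∑ ω : Ω, (zeros ω : ℝ)) =
        ∑ p : Fin n × Fin n, (#(constOn (m := m) 0 {p.1} {p.2}) : ℝ) := by exact_mod_cast this
    rw [h2]
    refine (sum_le_card_nsmul _ _ _ fun p _ => card_zero_entry p.1 p.2).trans_eq ?_
    simp [sq, hQdef]
  -- Total number of all-ones submatrices, likewise.
  have hB : (∑ ω : Ω, (bad ω : ℝ)) ≤ Q / 10 := by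
    have : ∑ ω : Ω, bad ω = ∑ p ∈ P ×ˢ P, #(constOn (m := m) 1 p.1 p.2) := by
      simp_rw [bad, constOn, card_filter]
      rw [sum_comm]
    have h2 : (∑ ω : Ω, (bad ω : ℝ)) =
        ∑ p ∈ P ×ˢ P, (#(constOn (m := m) 1 p.1 p.2) : ℝ) := by exact_mod_cast this
    have h3 : (∑ ω : Ω, (bad ω : ℝ)) ≤ (n.choose t : ℝ) ^ 2 * (2 ^ t * Q / 2 ^ (t * t)) := by
      rw [h2]
      refine (sum_le_card_nsmul _ _ (2 ^ t * Q / 2 ^ (t * t)) fun p hp => ?_).trans_eq ?_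
      · rw [mem_product, mem_powersetCard, mem_powersetCard] at hp
        rw [le_div_iff₀ (by positivity)]
        exact card_allones htm p.1 p.2 hp.1.2 hp.2.2
      · simp [P, sq]
    have h4 : (n.choose t : ℝ) * t.factorial ≤ n ^ t := by
      have : n.choose t * t.factorial ≤ n ^ t := by
        rw [mul_comm, ← Nat.descFactorial_eq_factorial_mul_choose]
        exact Nat.descFactorial_le_pow n t
      exact_mod_cast this
    have h5 : ((n : ℝ) ^ t) ^ 2 ≤ 2 ^ (t * t) := by
      have : (n ^ t) ^ 2 ≤ 2 ^ (t * t) := by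
        rw [← pow_mul, mul_comm t 2, pow_mul, pow_mul]
        exact Nat.pow_le_pow_left hnt t
      exact_mod_cast this
    have h6 : (10 : ℝ) * 2 ^ t ≤ (t.factorial : ℝ) ^ 2 := by
      exact_mod_cast ten_mul_two_pow_le ht
    have h7 : (n.choose t : ℝ) ^ 2 * (10 * 2 ^ t) ≤ 2 ^ (t * t) :=
      calc (n.choose t : ℝ) ^ 2 * (10 * 2 ^ t)
          ≤ (n.choose t : ℝ) ^ 2 * (t.factorial : ℝ) ^ 2 := by gcongr
        _ = ((n.choose t : ℝ) * t.factorial) ^ 2 := by ring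
        _ ≤ ((n : ℝ) ^ t) ^ 2 := by gcongr
        _ ≤ _ := h5
    refine h3.trans ?_
    rw [← mul_div_assoc, div_le_div_iff₀ (by positivity) (by norm_num)]
    calc _ = (n.choose t : ℝ) ^ 2 * (10 * 2 ^ t) * Q := by ring
      _ ≤ 2 ^ (t * t) * Q := by gcongr
      _ = _ := by ring
  have hm : (1 : ℝ) / 2 ^ m ≤ 1 / 100 := by
    have : (2 : ℝ) ^ 8 ≤ 2 ^ m := pow_le_pow_right₀ (by norm_num) (by omega)
    apply one_div_le_one_div_of_le <;> linarith
  -- Weighting each bad submatrix by `n ^ 2` lets a single average control both quantities.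
  obtain ⟨ω, -, hω⟩ : ∃ ω ∈ (univ : Finset Ω),
      (zeros ω : ℝ) + n ^ 2 * bad ω < 0.7 * (n : ℝ) ^ 2 := by
    apply exists_lt_of_sum_lt
    rw [sum_add_distrib, ← mul_sum, sum_const, card_univ, nsmul_eq_mul, hΩ]
    have hpos : 0 < (n : ℝ) ^ 2 * Q := by positivity
    have a1 : (n : ℝ) ^ 2 * ((1 / 2 + 1 / 2 ^ m) * Q) ≤ n ^ 2 * ((1 / 2 + 1 / 100) * Q) := by
      gcongr
    have a2 : (n : ℝ) ^ 2 * ∑ ω : Ω, (bad ω : ℝ) ≤ n ^ 2 * (Q / 10) := by gcongr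
    nlinarith
  have hsq : (0 : ℝ) < (n : ℝ) ^ 2 := by positivity
  have hbad : bad ω = 0 := by
    by_contra h
    have : (1 : ℝ) ≤ bad ω := by exact_mod_cast Nat.one_le_iff_ne_zero.2 h
    have : (0 : ℝ) ≤ zeros ω := Nat.cast_nonneg _
    nlinarith
  refine ⟨ω.1, ω.2, ?_, ?_⟩
  · have hsum : #{p : Fin n × Fin n | ω.1 p.1 ⬝ᵥ ω.2 p.2 = 1} + zeros ω = n ^ 2 := by
      have := card_filter_add_card_filter_not (s := (univ : Finset (Fin n × Fin n)))
        (fun p => ω.1 p.1 ⬝ᵥ ω.2 p.2 = 1)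
      have h01 : ∀ a : ZMod 2, ¬ a = 1 ↔ a = 0 := by decide
      simp_rw [h01] at this
      rw [this]
      simp [sq]
    have hsum' : (#{p : Fin n × Fin n | ω.1 p.1 ⬝ᵥ ω.2 p.2 = 1} : ℝ) + zeros ω = n ^ 2 := by
      exact_mod_cast hsum
    rw [hbad] at hω
    norm_num at hω ⊢
    linarith
  · intro I J hI hJ h
    have := filter_eq_empty_iff.1 (card_eq_zero.1 hbad) (x := (I, J))
      (by simp [P, hI, hJ])
    exact this h


/-- For all sufficiently large `n` there are matrices `B : n × ⌈14 log₂ n⌉` and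
`C : ⌈14 log₂ n⌉ × n` over `𝔽₂` whose product `A = B * C` has at least `0.3 n²`
ones and contains no `⌈2 log₂ n⌉ × ⌈2 log₂ n⌉` all-ones submatrix. -/
theorem exists_dense_allones_free_low_rank_product :
    ∃ n₀ : ℕ, ∀ n : ℕ, n₀ ≤ n →
    ∃ (B : Matrix (Fin n) (Fin ⌈14 * Real.logb 2 n⌉₊) (ZMod 2))
      (C : Matrix (Fin ⌈14 * Real.logb 2 n⌉₊) (Fin n) (ZMod 2)),
      ((0.3 : ℝ) * (n : ℝ) ^ 2 ≤
        ({p : Fin n × Fin n | (B * C) p.1 p.2 = 1}.ncard : ℝ)) ∧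
      ¬ ∃ I J : Finset (Fin n),
          I.card = ⌈2 * Real.logb 2 n⌉₊ ∧ J.card = ⌈2 * Real.logb 2 n⌉₊ ∧
          ∀ i ∈ I, ∀ j ∈ J, (B * C) i j = 1 := by
  refine ⟨4, fun n hn => ?_⟩
  have hn0 : (0 : ℝ) < n := by exact_mod_cast (by omega : 0 < n)
  have hL : 2 ≤ Real.logb 2 n := by
    rw [Real.le_logb_iff_rpow_le (by norm_num) hn0]
    norm_num
    exact_mod_cast hn
  have ht : 4 ≤ ⌈2 * Real.logb 2 n⌉₊ := by
    have h : ((4 : ℕ) : ℝ) ≤ ⌈2 * Real.logb 2 n⌉₊ :=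
      le_trans (by push_cast; linarith) (Nat.le_ceil _)
    exact_mod_cast h
  have htm : 2 * ⌈2 * Real.logb 2 n⌉₊ ≤ ⌈14 * Real.logb 2 n⌉₊ := by
    have h1 := Nat.ceil_lt_add_one (by linarith : 0 ≤ 2 * Real.logb 2 n)
    have h2 := Nat.le_ceil (14 * Real.logb 2 n)
    have h : ((2 * ⌈2 * Real.logb 2 n⌉₊ : ℕ) : ℝ) ≤ ⌈14 * Real.logb 2 n⌉₊ := by
      push_cast; linarith
    exact_mod_cast h
  have hnt : n ^ 2 ≤ 2 ^ ⌈2 * Real.logb 2 n⌉₊ := by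
    have h : (n : ℝ) ^ 2 ≤ 2 ^ ⌈2 * Real.logb 2 n⌉₊ := by
      rw [← Real.rpow_natCast 2, ← Real.logb_le_iff_le_rpow (by norm_num) (by positivity),
        Real.logb_pow]
      exact_mod_cast Nat.le_ceil (2 * Real.logb 2 n)
    exact_mod_cast h
  obtain ⟨B, D, h1, h2⟩ := exists_pair ht htm (by omega) hnt
  refine ⟨Matrix.of B, (Matrix.of D).transpose, ?_, ?_⟩
  · refine h1.trans_eq ?_
    rw [← Set.ncard_coe_finset]
    congr 2
    ext p
    rw [mem_coe, mem_filter]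
    exact ⟨fun h => h.2, fun h => ⟨mem_univ _, h⟩⟩
  · rintro ⟨I, J, hI, hJ, h⟩
    exact h2 I J hI hJ fun i hi j hj => h i hi j hj
end

section
/- There exists n₀ such that for every n ≥ n₀ there exists an n×n matrix A over 𝔽₂ with rank over 𝔽₂ at most ⌈14·log₂ n⌉ which is t-Ramsey for t = ⌈2·log₂ n⌉; that is, A contains no t×t all-ones submatrix and no t×t all-zeros submatrix. -/
/-!
The matrix is a random Gram-type product: with `k = ⌈14 log₂ n⌉`, pick vectors
`U i, W j ∈ 𝔽₂ᵏ` uniformly and independently and put `A i j = U i ⬝ᵥ W j`, so that `A` factors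
through `𝔽₂ᵏ` and has rank at most `k`. A first moment bound shows that some choice works.

Fix `t`-sets `I`, `J` and `b ∈ 𝔽₂`. For given `U`, the vectors `w` with `U i ⬝ᵥ w = b` for all
`i ∈ I` are none or a coset of the common orthogonal space of `(U i)_{i ∈ I}`, so the count of bad
pairs `(U, W)` is controlled by the `t`-th moment of the size of that space. Exposing the vectors
`U i` one at a time, the current space `K` is halved unless the new vector is orthogonal to all of
`K`, which has probability `1 / |K|`. As long as `|K| ≥ 2 ^ t`, one step therefore multiplies the
expected `t`-th power by at most `2⁻ᵗ + 1 / |K| ≤ 2 · 2⁻ᵗ` (`sum_cut_pow`). Since `k ≥ 2 t`, this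
applies in all `t` steps (`sum_common_pow`), and a fixed `(I, J, b)` is bad with
probability at most `2 ^ t · 2 ^ (-t²)` (`card_bad`). The union bound over
`2 · (n choose t)² ≤ 2 · n ^ (2 t) / t!² ≤ 2 · 2 ^ (t²) / t!²` triples finishes the proof, because
`2 ^ (t + 1) < t!²` for `t ≥ 4`.
-/

open Finset

open scoped Classical in
/-- The number of elements of a subspace of `𝔽₂ᵏ`. -/
noncomputable def subCard {k : ℕ} (K : Submodule (ZMod 2) (Fin k → ZMod 2)) : ℕ :=
  #{v : Fin k → ZMod 2 | v ∈ K}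

/-- The vectors of `K` orthogonal to `p`, for the standard dot product on `𝔽₂ᵏ`. -/
def cut {k : ℕ} (K : Submodule (ZMod 2) (Fin k → ZMod 2)) (p : Fin k → ZMod 2) :
    Submodule (ZMod 2) (Fin k → ZMod 2) :=
  K ⊓ LinearMap.ker (dotProductEquiv (ZMod 2) (Fin k) p)

/-- The vectors of `K` orthogonal to every member of the family `P`. -/
def cutFam {k : ℕ} {ι : Type*} (K : Submodule (ZMod 2) (Fin k → ZMod 2))
    (P : ι → Fin k → ZMod 2) : Submodule (ZMod 2) (Fin k → ZMod 2) :=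
  K ⊓ ⨅ i, LinearMap.ker (dotProductEquiv (ZMod 2) (Fin k) (P i))

lemma mem_cut {k : ℕ} {K : Submodule (ZMod 2) (Fin k → ZMod 2)} {p v : Fin k → ZMod 2} :
    v ∈ cut K p ↔ v ∈ K ∧ p ⬝ᵥ v = 0 := by
  simp [cut, Submodule.mem_inf]

lemma mem_cutFam {k : ℕ} {ι : Type*} {K : Submodule (ZMod 2) (Fin k → ZMod 2)}
    {P : ι → Fin k → ZMod 2} {v : Fin k → ZMod 2} :
    v ∈ cutFam K P ↔ v ∈ K ∧ ∀ i, P i ⬝ᵥ v = 0 := by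
  simp [cutFam, Submodule.mem_inf, Submodule.mem_iInf]

lemma zmod_two_cases (x : ZMod 2) : x = 0 ∨ x = 1 := by
  revert x; decide

open scoped Classical in
lemma subCard_split {k : ℕ} (K : Submodule (ZMod 2) (Fin k → ZMod 2)) (p : Fin k → ZMod 2) :
    subCard K = subCard (cut K p) + #{v : Fin k → ZMod 2 | v ∈ K ∧ p ⬝ᵥ v = 1} := by
  unfold subCard
  rw [← card_union_of_disjoint]
  · congr 1
    ext v
    rcases zmod_two_cases (p ⬝ᵥ v) with h | h <;> simp [mem_cut, h]
  · rw [disjoint_left]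
    intro v hv hv'
    simp only [mem_filter, mem_univ, true_and, mem_cut] at hv hv'
    rw [hv.2] at hv'
    exact absurd hv'.2 (by decide)

/-- If `p` is not orthogonal to all of `K`, then its orthogonal hyperplane cuts `K` in half. -/
lemma two_mul_subCard_cut {k : ℕ} (K : Submodule (ZMod 2) (Fin k → ZMod 2)) (p : Fin k → ZMod 2)
    (h : ∃ v ∈ K, p ⬝ᵥ v ≠ 0) : 2 * subCard (cut K p) = subCard K := by
  classical
  obtain ⟨v, hv, hpv⟩ := h
  have hpv1 : p ⬝ᵥ v = 1 := (zmod_two_cases _).resolve_left hpv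
  rw [subCard_split K p, two_mul]
  congr 1
  unfold subCard
  -- translation by `v` exchanges the two level sets of `p ⬝ᵥ ·` in `K`
  apply le_antisymm
  · refine card_le_card_of_injOn (fun x => x + v) ?_ (fun x _ y _ hxy => add_right_cancel hxy)
    intro x hx
    simp only [coe_filter, mem_univ, true_and, mem_cut, Set.mem_ofPred_eq] at hx ⊢
    exact ⟨K.add_mem hx.1 hv, by rw [dotProduct_add, hx.2, hpv1, zero_add]⟩
  · refine card_le_card_of_injOn (fun x => x - v) ?_ (fun x _ y _ hxy => sub_left_injective hxy)
    intro x hx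
    simp only [coe_filter, mem_univ, true_and, mem_cut, Set.mem_ofPred_eq] at hx ⊢
    exact ⟨K.sub_mem hx.1 hv, by rw [dotProduct_sub, hx.2, hpv1, sub_self]⟩

lemma cut_eq_self {k : ℕ} (K : Submodule (ZMod 2) (Fin k → ZMod 2)) (p : Fin k → ZMod 2)
    (h : ∀ v ∈ K, p ⬝ᵥ v = 0) : cut K p = K := by
  ext v
  rw [mem_cut]
  exact ⟨fun hv => hv.1, fun hv => ⟨hv, h v hv⟩⟩

lemma subCard_le_two_mul_cut {k : ℕ} (K : Submodule (ZMod 2) (Fin k → ZMod 2))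
    (p : Fin k → ZMod 2) : subCard K ≤ 2 * subCard (cut K p) := by
  by_cases h : ∃ v ∈ K, p ⬝ᵥ v ≠ 0
  · exact (two_mul_subCard_cut K p h).ge
  · push Not at h
    rw [cut_eq_self K p h]
    omega

lemma subCard_eq_pow {k : ℕ} (K : Submodule (ZMod 2) (Fin k → ZMod 2)) :
    subCard K = 2 ^ Module.finrank (ZMod 2) K := by
  classical
  have h := Module.card_eq_pow_finrank (K := ZMod 2) (V := K)
  rw [ZMod.card] at h
  rw [← h, subCard, Fintype.card_subtype]

open scoped Classical in
/-- A subspace and its orthogonal complement have complementary dimensions. -/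
lemma card_orth_mul {k : ℕ} (K : Submodule (ZMod 2) (Fin k → ZMod 2)) :
    #{p : Fin k → ZMod 2 | ∀ v ∈ K, p ⬝ᵥ v = 0} * subCard K = 2 ^ k := by
  have h1 : #{p : Fin k → ZMod 2 | ∀ v ∈ K, p ⬝ᵥ v = 0} =
      subCard (K.dualAnnihilator.comap (dotProductEquiv (ZMod 2) (Fin k)).toLinearMap) := by
    unfold subCard
    congr 1
    ext p
    simp [Submodule.mem_dualAnnihilator]
  have h2 := Subspace.finrank_add_finrank_dualAnnihilator_eq K
  have h3 : Module.finrank (ZMod 2)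
      (K.dualAnnihilator.comap (dotProductEquiv (ZMod 2) (Fin k)).toLinearMap) =
      Module.finrank (ZMod 2) K.dualAnnihilator :=
    LinearEquiv.finrank_eq
      (LinearEquiv.ofSubmodule' (dotProductEquiv (ZMod 2) (Fin k)) K.dualAnnihilator)
  rw [h1, subCard_eq_pow, subCard_eq_pow K, h3, ← pow_add, add_comm, h2]
  simp

/-- One exposure step: over a uniform `p`, the expectation of `|K ∩ p^⊥| ^ t` is at most
`2 · 2⁻ᵗ · |K| ^ t`, provided `|K| ≥ 2 ^ t`. -/
lemma sum_cut_pow {k t : ℕ} (K : Submodule (ZMod 2) (Fin k → ZMod 2)) (hK : 2 ^ t ≤ subCard K) :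
    2 ^ t * ∑ p : Fin k → ZMod 2, subCard (cut K p) ^ t ≤ 2 ^ (k + 1) * subCard K ^ t := by
  classical
  have hpt : ∀ p : Fin k → ZMod 2, 2 ^ t * subCard (cut K p) ^ t ≤
      subCard K ^ t + if (∀ v ∈ K, p ⬝ᵥ v = 0) then 2 ^ t * subCard K ^ t else 0 := by
    intro p
    split_ifs with h
    · rw [cut_eq_self K p h]
      omega
    · push Not at h
      rw [← mul_pow, two_mul_subCard_cut K p h]
      omega
  rw [mul_sum]
  refine (sum_le_sum fun p _ => hpt p).trans ?_
  rw [sum_add_distrib, ← sum_filter, sum_const, sum_const, smul_eq_mul, smul_eq_mul]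
  have h1 : #(univ : Finset (Fin k → ZMod 2)) = 2 ^ k := by simp [ZMod.card]
  have h2 := card_orth_mul K
  have h3 : #{p : Fin k → ZMod 2 | ∀ v ∈ K, p ⬝ᵥ v = 0} * 2 ^ t ≤ 2 ^ k :=
    h2 ▸ Nat.mul_le_mul_left _ hK
  rw [h1, ← mul_assoc, pow_succ, mul_two, add_mul]
  gcongr

/-- The moment bound after exposing `s` vectors. -/
lemma sum_cutFam_pow {k t : ℕ} (s : ℕ) : ∀ (K : Submodule (ZMod 2) (Fin k → ZMod 2)),
    2 ^ (t + s) ≤ subCard K →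
    (2 ^ t) ^ s * ∑ P : Fin s → Fin k → ZMod 2, subCard (cutFam K P) ^ t ≤
      (2 ^ (k + 1)) ^ s * subCard K ^ t := by
  induction s with
  | zero =>
    intro K _
    have : ∀ P : Fin 0 → Fin k → ZMod 2, cutFam K P = K := fun P => by
      ext v; simp [mem_cutFam]
    simp [this]
  | succ s ih =>
    intro K hK
    have hcons : ∀ (p : Fin k → ZMod 2) (P : Fin s → Fin k → ZMod 2),
        cutFam K (Fin.cons p P) = cutFam (cut K p) P := by
      intro p P
      ext v
      simp [mem_cutFam, mem_cut, Fin.forall_fin_succ, and_assoc]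
    rw [← (Fin.consEquiv fun _ : Fin (s + 1) => Fin k → ZMod 2).sum_comp, Fintype.sum_prod_type]
    simp only [Fin.consEquiv, Equiv.coe_fn_mk, hcons]
    have hstep : ∀ p : Fin k → ZMod 2,
        (2 ^ t) ^ s * ∑ P : Fin s → Fin k → ZMod 2, subCard (cutFam (cut K p) P) ^ t ≤
          (2 ^ (k + 1)) ^ s * subCard (cut K p) ^ t := by
      intro p
      apply ih
      have := subCard_le_two_mul_cut K p
      rw [← add_assoc, pow_succ] at hK
      omega
    calc (2 ^ t) ^ (s + 1) * ∑ p : Fin k → ZMod 2, ∑ P : Fin s → Fin k → ZMod 2,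
            subCard (cutFam (cut K p) P) ^ t
        = 2 ^ t * ∑ p : Fin k → ZMod 2, ((2 ^ t) ^ s * ∑ P : Fin s → Fin k → ZMod 2,
            subCard (cutFam (cut K p) P) ^ t) := by
          rw [← mul_sum]; ring
      _ ≤ 2 ^ t * ∑ p : Fin k → ZMod 2, (2 ^ (k + 1)) ^ s * subCard (cut K p) ^ t := by
          exact Nat.mul_le_mul_left _ (sum_le_sum fun p _ => hstep p)
      _ = (2 ^ (k + 1)) ^ s * (2 ^ t * ∑ p : Fin k → ZMod 2, subCard (cut K p) ^ t) := by
          rw [← mul_sum]; ring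
      _ ≤ (2 ^ (k + 1)) ^ s * (2 ^ (k + 1) * subCard K ^ t) := by
          refine Nat.mul_le_mul_left _ (sum_cut_pow K ?_)
          exact le_trans (Nat.pow_le_pow_right (by norm_num) (by omega)) hK
      _ = _ := by ring

/-- The moment bound for the common orthogonal space of the rows indexed by `I`, summed over all
families of `n` rows. -/
lemma sum_common_pow {n k t : ℕ} (hk : 2 * t ≤ k) (I : Finset (Fin n)) (hI : #I = t) :
    2 ^ (t * t) * ∑ U : Fin n → Fin k → ZMod 2, subCard (cutFam ⊤ fun i : I => U i) ^ t ≤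
      2 ^ t * 2 ^ (n * k) * 2 ^ (k * t) := by
  classical
  have htop : subCard (⊤ : Submodule (ZMod 2) (Fin k → ZMod 2)) = 2 ^ k := by
    simp [subCard, ZMod.card]
  have htn : t ≤ n := by
    rw [← hI]; simpa using card_le_univ I
  have hmain := sum_cutFam_pow (k := k) (t := t) t ⊤
    (by rw [htop]; exact Nat.pow_le_pow_right (by norm_num) (by omega))
  rw [htop] at hmain
  -- reindex the rows in `I` by `Fin t`
  have hre : ∑ P : I → Fin k → ZMod 2, subCard (cutFam ⊤ P) ^ t =
      ∑ P : Fin t → Fin k → ZMod 2, subCard (cutFam ⊤ P) ^ t := by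
    have e : I ≃ Fin t := I.equivFinOfCardEq hI
    rw [← (Equiv.arrowCongr e (Equiv.refl (Fin k → ZMod 2))).sum_comp]
    refine sum_congr rfl fun P _ => ?_
    congr 2
    ext v
    simp only [mem_cutFam, Equiv.arrowCongr_apply, Function.comp_apply, Equiv.refl_apply]
    rw [e.symm.forall_congr_left]
    simp
  -- the rows outside `I` are free
  have hsplit : ∑ U : Fin n → Fin k → ZMod 2, subCard (cutFam ⊤ fun i : I => U i) ^ t =
      (2 ^ k) ^ (n - t) * ∑ P : I → Fin k → ZMod 2, subCard (cutFam ⊤ P) ^ t := by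
    rw [← (Equiv.piEquivPiSubtypeProd (fun i => i ∈ I)
      (fun _ : Fin n => Fin k → ZMod 2)).symm.sum_comp, Fintype.sum_prod_type, mul_sum]
    refine sum_congr rfl fun P _ => ?_
    have : ∀ Q : {i // i ∉ I} → Fin k → ZMod 2,
        (fun i : I => (Equiv.piEquivPiSubtypeProd (fun i => i ∈ I)
          (fun _ : Fin n => Fin k → ZMod 2)).symm (P, Q) i) = P := by
      intro Q
      ext i
      simp [Equiv.piEquivPiSubtypeProd]
    simp only [this, sum_const, smul_eq_mul]
    congr 1
    simp [ZMod.card, Fintype.card_subtype_compl, hI]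
  rw [hsplit, hre]
  calc 2 ^ (t * t) * ((2 ^ k) ^ (n - t) * ∑ P : Fin t → Fin k → ZMod 2, subCard (cutFam ⊤ P) ^ t)
      = (2 ^ k) ^ (n - t) *
        ((2 ^ t) ^ t * ∑ P : Fin t → Fin k → ZMod 2, subCard (cutFam ⊤ P) ^ t) := by
        rw [← pow_mul]; ring
    _ ≤ (2 ^ k) ^ (n - t) * ((2 ^ (k + 1)) ^ t * (2 ^ k) ^ t) := by gcongr
    _ = 2 ^ t * 2 ^ (n * k) * 2 ^ (k * t) := by
        obtain ⟨m, rfl⟩ := Nat.exists_eq_add_of_le htn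
        rw [Nat.add_sub_cancel_left]
        simp only [← pow_mul, ← pow_add]
        congr 1
        ring

open scoped Classical in
/-- The solution set of `P i ⬝ᵥ w = b` for all `i` is empty or a coset of the homogeneous one. -/
lemma card_affine_le {k : ℕ} {ι : Type*} (P : ι → Fin k → ZMod 2) (b : ZMod 2) :
    #{w : Fin k → ZMod 2 | ∀ i, P i ⬝ᵥ w = b} ≤ subCard (cutFam ⊤ P) := by
  by_cases h : ∃ w₀ : Fin k → ZMod 2, ∀ i, P i ⬝ᵥ w₀ = b
  · obtain ⟨w₀, hw₀⟩ := h
    refine card_le_card_of_injOn (fun x => x - w₀) ?_ (fun x _ y _ hxy => sub_left_injective hxy)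
    intro x hx
    simp only [coe_filter, mem_univ, true_and, mem_cutFam, Set.mem_ofPred_eq,
      Submodule.mem_top] at hx ⊢
    intro i
    rw [dotProduct_sub, hx, hw₀, sub_self]
  · push Not at h
    rw [filter_eq_empty_iff.2]
    · simp
    · intro w _ hw
      obtain ⟨i, hi⟩ := h w
      exact hi (hw i)

open scoped Classical in
/-- A fixed `t × t` block is constant equal to `b` with probability at most `2 ^ t · 2 ^ (-t²)`. -/
lemma card_bad {n k t : ℕ} (hk : 2 * t ≤ k) (I J : Finset (Fin n)) (hI : #I = t) (hJ : #J = t)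
    (b : ZMod 2) :
    2 ^ (t * t) * #{x : (Fin n → Fin k → ZMod 2) × (Fin n → Fin k → ZMod 2) |
        ∀ i ∈ I, ∀ j ∈ J, x.1 i ⬝ᵥ x.2 j = b} ≤ 2 ^ t * 2 ^ (2 * (n * k)) := by
  have htn : t ≤ n := by
    rw [← hI]; simpa using card_le_univ I
  have hU : ∀ U : Fin n → Fin k → ZMod 2,
      #{W : Fin n → Fin k → ZMod 2 | ∀ i ∈ I, ∀ j ∈ J, U i ⬝ᵥ W j = b} ≤
        subCard (cutFam ⊤ fun i : I => U i) ^ t * 2 ^ (k * (n - t)) := by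
    intro U
    -- for fixed `U` the columns `W j` are constrained independently of each other
    have : ({W : Fin n → Fin k → ZMod 2 | ∀ i ∈ I, ∀ j ∈ J, U i ⬝ᵥ W j = b} : Finset _) =
        Fintype.piFinset fun j => if j ∈ J then
          ({w : Fin k → ZMod 2 | ∀ i : I, U i ⬝ᵥ w = b} : Finset _) else univ := by
      ext W
      simp only [mem_filter, mem_univ, true_and, Fintype.mem_piFinset]
      constructor
      · intro h j
        split_ifs with hj
        · simpa using fun i hi => h i hi j hj
        · simp
      · intro h i hi j hj
        have := h j
        rw [if_pos hj] at this
        simp only [mem_filter, mem_univ, true_and] at this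
        exact this ⟨i, hi⟩
    rw [this, Fintype.card_piFinset]
    calc ∏ j, #(if j ∈ J then ({w : Fin k → ZMod 2 | ∀ i : I, U i ⬝ᵥ w = b} : Finset _) else univ)
        ≤ ∏ j, (if j ∈ J then subCard (cutFam ⊤ fun i : I => U i) else 2 ^ k) := by
          refine prod_le_prod (fun j _ => Nat.zero_le _) fun j _ => ?_
          split_ifs
          · refine le_trans (le_of_eq ?_) (card_affine_le (fun i : I => U i) b)
            congr!
          · simp [ZMod.card]
      _ = _ := by
          rw [prod_ite, prod_const, prod_const, pow_mul]
          congr 2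
          · simp [hJ]
          · rw [filter_not, filter_mem_eq_inter, univ_inter, ← compl_eq_univ_sdiff, card_compl, hJ]
            simp
  have hsum : #{x : (Fin n → Fin k → ZMod 2) × (Fin n → Fin k → ZMod 2) |
        ∀ i ∈ I, ∀ j ∈ J, x.1 i ⬝ᵥ x.2 j = b} =
      ∑ U : Fin n → Fin k → ZMod 2,
        #{W : Fin n → Fin k → ZMod 2 | ∀ i ∈ I, ∀ j ∈ J, U i ⬝ᵥ W j = b} := by
    simp only [card_filter]
    rw [Fintype.sum_prod_type]
  rw [hsum]
  calc _ ≤ 2 ^ (t * t) * ∑ U : Fin n → Fin k → ZMod 2,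
          subCard (cutFam ⊤ fun i : I => U i) ^ t * 2 ^ (k * (n - t)) := by
        gcongr with U _
        exact hU U
    _ = (2 ^ (t * t) * ∑ U : Fin n → Fin k → ZMod 2, subCard (cutFam ⊤ fun i : I => U i) ^ t) *
          2 ^ (k * (n - t)) := by rw [← sum_mul]; ring
    _ ≤ (2 ^ t * 2 ^ (n * k) * 2 ^ (k * t)) * 2 ^ (k * (n - t)) := by
        exact Nat.mul_le_mul_right _ (sum_common_pow hk I hI)
    _ = _ := by
        obtain ⟨m, rfl⟩ := Nat.exists_eq_add_of_le htn
        rw [Nat.add_sub_cancel_left]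
        simp only [← pow_add]
        congr 1
        ring

/-- The union bound wins: fewer than `2 ^ (t²) / 2 ^ t` triples `(I, J, b)`. -/
lemma union_arith {n t : ℕ} (ht : 4 ≤ t) (hn : n ^ 2 ≤ 2 ^ t) :
    2 * n.choose t ^ 2 * 2 ^ t < 2 ^ (t * t) := by
  have h1 : n.choose t * t.factorial ≤ n ^ t := by
    rw [mul_comm, ← Nat.descFactorial_eq_factorial_mul_choose]
    exact Nat.descFactorial_le_pow n t
  have h2 : ∀ m, 4 ≤ m → 2 ^ m < m.factorial := by
    intro m hm
    induction m, hm using Nat.le_induction with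
    | base => decide
    | succ m hm ih =>
      rw [Nat.factorial_succ, pow_succ, mul_comm]
      exact Nat.mul_lt_mul_of_le_of_lt (by omega) ih (by omega)
  have h3 : n.choose t ^ 2 * t.factorial ^ 2 ≤ 2 ^ (t * t) := by
    calc n.choose t ^ 2 * t.factorial ^ 2 = (n.choose t * t.factorial) ^ 2 := by ring
      _ ≤ (n ^ t) ^ 2 := by gcongr
      _ = (n ^ 2) ^ t := by ring
      _ ≤ (2 ^ t) ^ t := by gcongr
      _ = _ := by rw [pow_mul]
  have h4 : 2 * 2 ^ t < t.factorial ^ 2 := by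
    have := h2 t ht
    have h16 : 2 ≤ t.factorial := (by
      have : 2 ^ 1 ≤ 2 ^ t := Nat.pow_le_pow_right (by norm_num) (by omega)
      omega)
    nlinarith
  rcases Nat.eq_zero_or_pos (n.choose t) with h0 | h0
  · rw [h0]; simp
  · calc 2 * n.choose t ^ 2 * 2 ^ t = n.choose t ^ 2 * (2 * 2 ^ t) := by ring
      _ < n.choose t ^ 2 * t.factorial ^ 2 := by gcongr
      _ ≤ _ := h3

/-- Some choice of rows and columns produces no constant `t × t` block. -/
lemma exists_good {n k t : ℕ} (hk : 2 * t ≤ k) (ht : 4 ≤ t) (hn : n ^ 2 ≤ 2 ^ t) :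
    ∃ U W : Fin n → Fin k → ZMod 2, ∀ b : ZMod 2, ∀ I J : Finset (Fin n), #I = t → #J = t →
      ¬ ∀ i ∈ I, ∀ j ∈ J, U i ⬝ᵥ W j = b := by
  classical
  by_contra! hcon
  let S := (univ : Finset (ZMod 2)) ×ˢ
    (powersetCard t (univ : Finset (Fin n)) ×ˢ powersetCard t (univ : Finset (Fin n)))
  let bad : ZMod 2 × Finset (Fin n) × Finset (Fin n) →
      Finset ((Fin n → Fin k → ZMod 2) × (Fin n → Fin k → ZMod 2)) :=
    fun s => {x | ∀ i ∈ s.2.1, ∀ j ∈ s.2.2, x.1 i ⬝ᵥ x.2 j = s.1}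
  have hcover : (univ : Finset ((Fin n → Fin k → ZMod 2) × (Fin n → Fin k → ZMod 2))) ⊆
      S.biUnion bad := by
    intro x _
    obtain ⟨b, I, J, hI, hJ, h⟩ := hcon x.1 x.2
    rw [mem_biUnion]
    exact ⟨(b, I, J), by simp [S, mem_powersetCard, hI, hJ], by simpa [bad] using h⟩
  have hcard := (card_le_card hcover).trans card_biUnion_le
  have huniv : #(univ : Finset ((Fin n → Fin k → ZMod 2) × (Fin n → Fin k → ZMod 2))) =
      2 ^ (2 * (n * k)) := by
    simp only [card_univ, Fintype.card_prod, Fintype.card_pi, ZMod.card, prod_const,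
      Fintype.card_fin, ← pow_mul, ← pow_add]
    congr 1
    ring
  have hS : #S = 2 * n.choose t ^ 2 := by
    simp [S, card_product, card_powersetCard, ZMod.card, sq]
  have hbad : ∀ s ∈ S, 2 ^ (t * t) * #(bad s) ≤ 2 ^ t * 2 ^ (2 * (n * k)) := by
    intro s hs
    simp only [S, mem_product, mem_powersetCard] at hs
    exact card_bad hk _ _ hs.2.1.2 hs.2.2.2 _
  have hfin : 2 ^ (t * t) * 2 ^ (2 * (n * k)) ≤
      (2 * n.choose t ^ 2 * 2 ^ t) * 2 ^ (2 * (n * k)) := by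
    calc 2 ^ (t * t) * 2 ^ (2 * (n * k)) ≤ 2 ^ (t * t) * ∑ s ∈ S, #(bad s) := by
          rw [← huniv]; gcongr
      _ = ∑ s ∈ S, 2 ^ (t * t) * #(bad s) := mul_sum _ _ _
      _ ≤ ∑ s ∈ S, 2 ^ t * 2 ^ (2 * (n * k)) := sum_le_sum hbad
      _ = _ := by rw [sum_const, hS, smul_eq_mul]; ring
  exact absurd (Nat.le_of_mul_le_mul_right hfin (by positivity)) (not_le.2 (union_arith ht hn))

/-- For all sufficiently large `n` there is an `n × n` matrix `A` over `𝔽₂` of rank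
at most `⌈14 log₂ n⌉` which is `t`-Ramsey for `t = ⌈2 log₂ n⌉`: it contains neither a
`t × t` all-ones submatrix nor a `t × t` all-zeros submatrix. -/
theorem exists_low_rank_ramsey_matrix :
    ∃ n₀ : ℕ, ∀ n : ℕ, n₀ ≤ n →
    ∃ A : Matrix (Fin n) (Fin n) (ZMod 2),
      A.rank ≤ ⌈14 * Real.logb 2 n⌉₊ ∧
      (¬ ∃ I J : Finset (Fin n),
          I.card = ⌈2 * Real.logb 2 n⌉₊ ∧ J.card = ⌈2 * Real.logb 2 n⌉₊ ∧
          ∀ i ∈ I, ∀ j ∈ J, A i j = 1) ∧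
      (¬ ∃ I J : Finset (Fin n),
          I.card = ⌈2 * Real.logb 2 n⌉₊ ∧ J.card = ⌈2 * Real.logb 2 n⌉₊ ∧
          ∀ i ∈ I, ∀ j ∈ J, A i j = 0) := by
  refine ⟨4, fun n hn => ?_⟩
  have hn0 : (0 : ℝ) < n := by
    have : 0 < n := by omega
    exact_mod_cast this
  have hL : 2 ≤ Real.logb 2 n := by
    rw [Real.le_logb_iff_rpow_le (by norm_num) hn0]
    norm_num
    exact_mod_cast hn
  have hpow : (2 : ℝ) ^ Real.logb 2 n = n := Real.rpow_logb (by norm_num) (by norm_num) hn0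
  generalize Real.logb 2 n = L at hL hpow
  have ht1 : 2 * L ≤ ⌈2 * L⌉₊ := Nat.le_ceil _
  have ht2 : (⌈2 * L⌉₊ : ℝ) < 2 * L + 1 := Nat.ceil_lt_add_one (by linarith)
  have hk1 : 14 * L ≤ ⌈14 * L⌉₊ := Nat.le_ceil _
  generalize ⌈2 * L⌉₊ = t at ht1 ht2
  generalize ⌈14 * L⌉₊ = k at hk1
  have ht : 4 ≤ t := by
    have : (4 : ℝ) ≤ t := by linarith
    exact_mod_cast this
  have hk : 2 * t ≤ k := by
    have : (2 * t : ℝ) ≤ k := by linarith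
    exact_mod_cast this
  have hnt : n ^ 2 ≤ 2 ^ t := by
    have : ((n : ℝ)) ^ 2 ≤ 2 ^ t := by
      rw [← hpow, ← Real.rpow_natCast, ← Real.rpow_natCast, ← Real.rpow_mul (by norm_num)]
      apply Real.rpow_le_rpow_of_exponent_le (by norm_num)
      push_cast
      linarith
    exact_mod_cast this
  obtain ⟨U, W, h⟩ := exists_good hk ht hnt
  refine ⟨Matrix.of U * (Matrix.of W).transpose, ?_, ?_, ?_⟩
  · refine (Matrix.rank_mul_le_left _ _).trans ?_
    simpa using Matrix.rank_le_width (Matrix.of U)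
  · rintro ⟨I, J, hI, hJ, hIJ⟩
    exact h 1 I J hI hJ hIJ
  · rintro ⟨I, J, hI, hJ, hIJ⟩
    exact h 0 I J hI hJ hIJ
end

section
/- For natural numbers d ≤ k, the number of k×k matrices over 𝔽₂ whose rank (over 𝔽₂) is strictly less than d satisfies N · 2^((k−d)²) ≤ 2^(k²+k); equivalently, a uniformly random k×k matrix over 𝔽₂ has rank less than d with probability at most 2^(k−(k−d)²). -/
/-!
Let `M` have row rank at most `d`. Some `d` of its rows, indexed by a set `S`, span the row space,
so `M` is recovered from `S`, from the `d` rows indexed by `S`, and from the coefficients expressing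
each of the other `k - d` rows as a combination of these. There are at most `2 ^ k` sets `S`,
exactly `2 ^ (d * k)` choices of rows and `2 ^ ((k - d) * d)` choices of coefficients, and
`d * k + (k - d) * d + (k - d) ^ 2 = k ^ 2`. This bounds the number of matrices of rank at most `d`,
hence also of those of rank less than `d`.
-/

/-- The matrix whose rows indexed by `S` are `B`, and whose `i`-th row for `i ∉ S` is the linear
combination of the rows of `B` with coefficients `C i`. -/
def extendRows {k : ℕ} (S : Finset (Fin k)) (B : S → Fin k → ZMod 2)
    (C : (↥(Sᶜ : Finset (Fin k))) → S → ZMod 2) : Matrix (Fin k) (Fin k) (ZMod 2) :=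
  fun i => if h : i ∈ S then B ⟨i, h⟩
    else ∑ j, C ⟨i, Finset.mem_compl.2 h⟩ j • B j

lemma exists_spanning_rows {k d : ℕ} (hdk : d ≤ k) (M : Matrix (Fin k) (Fin k) (ZMod 2))
    (hM : M.rank ≤ d) :
    ∃ S : Finset (Fin k), S.card = d ∧
      ∀ i, M i ∈ Submodule.span (ZMod 2) (Set.range fun j : S => M j) := by
  obtain ⟨κ, a, ha, hspan, hli⟩ := exists_linearIndependent' (ZMod 2) M.row
  have : Finite κ := Finite.of_injective a ha
  have := Fintype.ofFinite κ
  have hcard : (Finset.univ.map ⟨a, ha⟩ : Finset (Fin k)).card ≤ d := by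
    rw [Finset.card_map, Finset.card_univ, ← finrank_span_eq_card hli, hspan,
      ← Matrix.rank_eq_finrank_span_row]
    exact hM
  obtain ⟨S, hS, hSd⟩ := Finset.exists_superset_card_eq hcard (by simpa using hdk)
  refine ⟨S, hSd, fun i => ?_⟩
  have hi : M i ∈ Submodule.span (ZMod 2) (Set.range (M.row ∘ a)) := by
    rw [hspan]
    exact Submodule.subset_span ⟨i, rfl⟩
  refine Submodule.span_mono ?_ hi
  rintro _ ⟨x, rfl⟩
  exact ⟨⟨a x, hS (by simp)⟩, rfl⟩

lemma exists_extendRows_eq {k : ℕ} (S : Finset (Fin k)) (M : Matrix (Fin k) (Fin k) (ZMod 2))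
    (h : ∀ i, M i ∈ Submodule.span (ZMod 2) (Set.range fun j : S => M j)) :
    ∃ C, extendRows S (fun j => M j) C = M := by
  choose c hc using fun i => (Submodule.mem_span_range_iff_exists_fun (ZMod 2)).1 (h i)
  refine ⟨fun i => c i, ?_⟩
  funext i
  by_cases hi : i ∈ S
  · simp [extendRows, hi]
  · simpa [extendRows, hi] using hc i

lemma ncard_rank_le {k d : ℕ} (hdk : d ≤ k) :
    {M : Matrix (Fin k) (Fin k) (ZMod 2) | M.rank ≤ d}.ncard ≤
      2 ^ k * (2 ^ (d * k) * 2 ^ (d * (k - d))) := by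
  let T := Σ S : {S : Finset (Fin k) // S.card = d},
    (S.1 → Fin k → ZMod 2) × ((↥(S.1ᶜ : Finset (Fin k))) → S.1 → ZMod 2)
  let f : T → Matrix (Fin k) (Fin k) (ZMod 2) := fun x => extendRows x.1.1 x.2.1 x.2.2
  have hsub : {M : Matrix (Fin k) (Fin k) (ZMod 2) | M.rank ≤ d} ⊆ f '' Set.univ := by
    intro M hM
    obtain ⟨S, hS, h⟩ := exists_spanning_rows hdk M hM
    obtain ⟨C, hC⟩ := exists_extendRows_eq S M h
    exact ⟨⟨⟨S, hS⟩, _, C⟩, trivial, hC⟩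
  have hT : Nat.card T = k.choose d * (2 ^ (d * k) * 2 ^ (d * (k - d))) := by
    have hfib : ∀ S : {S : Finset (Fin k) // S.card = d},
        Fintype.card ((S.1 → Fin k → ZMod 2) × ((↥(S.1ᶜ : Finset (Fin k))) → S.1 → ZMod 2)) =
          2 ^ (d * k) * 2 ^ (d * (k - d)) := by
      rintro ⟨S, hS⟩
      simp only [Fintype.card_prod, Fintype.card_fun, Fintype.card_coe, Fintype.card_fin,
        ZMod.card, Finset.card_compl, hS]
      rw [← pow_mul, ← pow_mul, mul_comm k d]
    rw [Nat.card_eq_fintype_card, Fintype.card_sigma, Finset.sum_congr rfl fun S _ => hfib S]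
    simp
  calc _ ≤ (f '' Set.univ).ncard := Set.ncard_le_ncard hsub (Set.toFinite _)
    _ ≤ (Set.univ : Set T).ncard := Set.ncard_image_le (Set.toFinite _)
    _ = k.choose d * (2 ^ (d * k) * 2 ^ (d * (k - d))) := by rw [Set.ncard_univ, hT]
    _ ≤ _ := Nat.mul_le_mul_right _ (Nat.choose_le_two_pow k d)

/-- For `d ≤ k`, the number `N` of `k × k` matrices over `𝔽₂` with rank strictly
less than `d` satisfies `N * 2^((k-d)²) ≤ 2^(k² + k)`; equivalently, a uniformly
random `k × k` matrix over `𝔽₂` has rank `< d` with probability at most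
`2^(k - (k-d)²)`. -/
theorem card_low_rank_matrices_le (k d : ℕ) (hdk : d ≤ k) :
    {M : Matrix (Fin k) (Fin k) (ZMod 2) | M.rank < d}.ncard *
      2 ^ ((k - d) ^ 2) ≤ 2 ^ (k ^ 2 + k) := by
  have hsub : {M : Matrix (Fin k) (Fin k) (ZMod 2) | M.rank < d} ⊆ {M | M.rank ≤ d} := by
    intro M hM
    simp only [Set.mem_ofPred_eq] at hM ⊢
    exact hM.le
  have hle := (Set.ncard_le_ncard hsub (Set.toFinite _)).trans (ncard_rank_le hdk)
  refine (Nat.mul_le_mul_right _ hle).trans_eq ?_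
  obtain ⟨e, rfl⟩ := Nat.exists_eq_add_of_le hdk
  rw [Nat.add_sub_cancel_left, ← pow_add, ← pow_add, ← pow_add]
  congr 1
  ring
end

section
/- Let k ≥ 1, n = 2^k, and for each i ∈ {0,…,n−1} let r_i : {0,…,n−1} → Bool be the i-th row of the Sierpinski matrix, i.e., r_i(j) = true if and only if the bitwise AND of i and j equals j. If V is a finite set of Boolean vectors of length n such that every row r_i is the coordinatewise OR of some subset of V, then V has cardinality at least n. -/
/-!
Since `i &&& i = i`, some vector `f i ∈ V` used for row `i` is true at coordinate `i`, and it is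
true only at coordinates `j` whose binary digits are contained in those of `i`. If `f a = f b`,
the digits of `a` and of `b` contain each other, so `a = b`: the map `f` injects the index set
into `V`.
-/

/-- Let `n = 2^k` with `k ≥ 1`, and let `r i` be the `i`-th row of the Sierpinski
matrix viewed as a Boolean vector: `r i j = true ↔ i &&& j = j`.  If `V` is a
finite set of Boolean vectors of length `n` such that every row `r i` is the
coordinatewise OR of some subset of `V`, then `V` has at least `n` elements. -/
theorem sierpinski_or_spanning_set_card (k : ℕ) (hk : 1 ≤ k)
    (V : Finset (Fin (2 ^ k) → Bool))
    (hspan : ∀ i : Fin (2 ^ k), ∃ W ⊆ V, ∀ j : Fin (2 ^ k),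
      (i.val &&& j.val = j.val) ↔ ∃ v ∈ W, v j = true) :
    2 ^ k ≤ V.card := by
  have key : ∀ i : Fin (2 ^ k), ∃ v ∈ V, v i = true ∧
      ∀ j : Fin (2 ^ k), v j = true → i.val &&& j.val = j.val := by
    intro i
    obtain ⟨W, hWV, hW⟩ := hspan i
    obtain ⟨v, hvW, hvi⟩ := (hW i).1 (Nat.and_self _)
    exact ⟨v, hWV hvW, hvi, fun j hj => (hW j).2 ⟨v, hvW, hj⟩⟩
  choose f hfV hfi hf using key
  have hinj : Function.Injective f := by
    intro a b hab
    have hba : a.val &&& b.val = b.val := hf a b (hab ▸ hfi b)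
    have hab' : b.val &&& a.val = a.val := hf b a (hab ▸ hfi a)
    exact Fin.ext (by rw [← hab', Nat.and_comm, hba])
  simpa using Finset.card_le_card_of_injOn (s := Finset.univ) f (fun i _ => hfV i) hinj.injOn
end

section
/- For n ∈ ℕ, let t(n) = ⌈2·log₂ n⌉ and s(n) = ⌈14·log₂ n⌉, and let P(n) be the set of all pairs (B, C) where B is an n×s(n) matrix and C is an s(n)×n matrix over 𝔽₂. Let E(n) ⊆ P(n) be the set of pairs for which the product B·C contains a t(n)×t(n) all-ones submatrix or a t(n)×t(n) all-zeros submatrix. Then the ratio |E(n)| / |P(n)| tends to 0 as n → ∞. -/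
/-! The proof is a union bound over the pairs `(I, J)` of `t`-sets of rows and columns, where
`t = ⌈2 log₂ n⌉` and `s = ⌈14 log₂ n⌉ ≥ 2 t`.

For fixed `I, J`, condition on the rows of `B` indexed by `I`, and let `W ⊆ 𝔽₂ˢ` be their
annihilator. A column of `C` in `J` must lie in a fixed coset of `W` (or in the empty set), so
what is needed is a bound on the sum of `|W| ^ t` over all choices of `t` rows
(`sum_ann_pow_le`). Rows are added one at a time: after `k` rows, a new row in their span (at most
`2 ^ k ≤ 2 ^ t` choices) leaves `W` unchanged, while any other new row halves `W`
(`two_mul_card_ann_cons_le`). The sum therefore grows by a factor of at most `2 ^ t + 2 ^ (s - t)`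
at each step, and the probability that the `I × J` block is constant is at most
`2 * 2 ^ t / 2 ^ (t ^ 2)`.

There are `(n.choose t) ^ 2 ≤ n ^ (2 * t) / (t !) ^ 2 ≤ 2 ^ (t ^ 2) / (t !) ^ 2` pairs `(I, J)`,
because `n ^ 2 ≤ 2 ^ t`. The powers `2 ^ (t ^ 2)` cancel, which leaves `2 * 2 ^ t / (t !) ^ 2`, and
this tends to `0` thanks to the factorials. -/


open Filter

/-- `sWidth n = ⌈14 log₂ n⌉`, the inner dimension of the random factorization. -/
noncomputable def sWidth (n : ℕ) : ℕ := ⌈14 * Real.logb 2 n⌉₊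

/-- `tSize n = ⌈2 log₂ n⌉`, the side length of the forbidden constant submatrices. -/
noncomputable def tSize (n : ℕ) : ℕ := ⌈2 * Real.logb 2 n⌉₊


/-! ### Annihilators of families of vectors -/

/-- The set of vectors of `𝔽₂ˢ` orthogonal to all the `b i`, for the standard dot product. -/
def ann {ι : Type*} [Fintype ι] {s : ℕ} (b : ι → Fin s → ZMod 2) : Finset (Fin s → ZMod 2) :=
  Finset.univ.filter fun c => ∀ i, b i ⬝ᵥ c = 0

lemma mem_ann {ι : Type*} [Fintype ι] {s : ℕ} {b : ι → Fin s → ZMod 2} {c : Fin s → ZMod 2} :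
    c ∈ ann b ↔ ∀ i, b i ⬝ᵥ c = 0 := by simp [ann]

lemma card_vec (s : ℕ) : Fintype.card (Fin s → ZMod 2) = 2 ^ s := by simp [ZMod.card]

/-- A vector outside a span is detected by some vector orthogonal to that span. -/
lemma exists_mem_ann {ι : Type*} [Fintype ι] {s : ℕ} (b : ι → Fin s → ZMod 2)
    {x : Fin s → ZMod 2} (hx : x ∉ Submodule.span (ZMod 2) (Set.range b)) :
    ∃ c ∈ ann b, x ⬝ᵥ c ≠ 0 := by
  obtain ⟨f, hf, hle⟩ := Submodule.exists_le_ker_of_notMem hx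
  have key : ∀ v, v ⬝ᵥ (dotProductEquiv (ZMod 2) (Fin s)).symm f = f v := fun v => by
    rw [dotProduct_comm, ← dotProductEquiv_apply_apply, LinearEquiv.apply_symm_apply]
  refine ⟨_, mem_ann.2 fun i => ?_, by rwa [key]⟩
  rw [key]
  exact hle (Submodule.subset_span ⟨i, rfl⟩)

lemma ann_cons_subset {k s : ℕ} (x : Fin s → ZMod 2) (b : Fin k → Fin s → ZMod 2) :
    ann (Fin.cons x b : Fin (k + 1) → Fin s → ZMod 2) ⊆ ann b := by
  intro c hc
  rw [mem_ann] at hc ⊢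
  intro i
  simpa using hc i.succ

lemma two_mul_card_ann_cons_le {k s : ℕ} (x : Fin s → ZMod 2) (b : Fin k → Fin s → ZMod 2)
    (hx : x ∉ Submodule.span (ZMod 2) (Set.range b)) :
    2 * (ann (Fin.cons x b : Fin (k + 1) → Fin s → ZMod 2)).card ≤ (ann b).card := by
  classical
  obtain ⟨c, hc, hxc⟩ := exists_mem_ann b hx
  set A := ann (Fin.cons x b : Fin (k + 1) → Fin s → ZMod 2) with hA
  -- The translate of the new annihilator by `c` is disjoint from it, inside the old one.
  have hdisj : Disjoint A (A.image (c + ·)) := by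
    rw [Finset.disjoint_left]
    intro d hd hd'
    obtain ⟨e, he, rfl⟩ := Finset.mem_image.1 hd'
    have h1 := mem_ann.1 hd 0
    have h2 := mem_ann.1 he 0
    simp only [Fin.cons_zero, dotProduct_add] at h1 h2
    rw [h2, add_zero] at h1
    exact hxc h1
  have hsub : A ∪ A.image (c + ·) ⊆ ann b := by
    refine Finset.union_subset (ann_cons_subset x b) fun d hd => ?_
    obtain ⟨e, he, rfl⟩ := Finset.mem_image.1 hd
    have he' := mem_ann.1 (ann_cons_subset x b he)
    exact mem_ann.2 fun i => by rw [dotProduct_add, mem_ann.1 hc i, he' i, add_zero]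
  have := Finset.card_le_card hsub
  rw [Finset.card_union_of_disjoint hdisj,
    Finset.card_image_of_injective _ (add_right_injective c)] at this
  omega

lemma card_span_le_s12 {k s : ℕ} (b : Fin k → Fin s → ZMod 2) :
    letI := Classical.decPred (· ∈ Submodule.span (ZMod 2) (Set.range b))
    (Finset.univ.filter (· ∈ Submodule.span (ZMod 2) (Set.range b))).card ≤ 2 ^ k := by
  classical
  have hsub : (Finset.univ.filter (· ∈ Submodule.span (ZMod 2) (Set.range b))) ⊆
      Finset.univ.image (fun c : Fin k → ZMod 2 => ∑ i, c i • b i) := by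
    intro x hx
    obtain ⟨c, hc⟩ := (Submodule.mem_span_range_iff_exists_fun _).1 (Finset.mem_filter.1 hx).2
    exact Finset.mem_image.2 ⟨c, Finset.mem_univ _, hc⟩
  refine (le_of_eq (by congr!)).trans ((Finset.card_le_card hsub).trans
    (Finset.card_image_le.trans ?_))
  rw [Finset.card_univ, card_vec]

/-! ### The moment bound for the annihilator of random rows -/

lemma sum_ann_cons_pow_le {k s t : ℕ} (hkt : k ≤ t) (hts : t ≤ s) (b : Fin k → Fin s → ZMod 2) :
    ∑ x : Fin s → ZMod 2, (ann (Fin.cons x b : Fin (k + 1) → Fin s → ZMod 2)).card ^ t ≤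
      (2 ^ t + 2 ^ (s - t)) * (ann b).card ^ t := by
  classical
  rw [← Finset.sum_filter_add_sum_filter_not Finset.univ
    (· ∈ Submodule.span (ZMod 2) (Set.range b)), add_mul]
  refine add_le_add ?_ ?_
  · refine (Finset.sum_le_card_nsmul _ _ ((ann b).card ^ t) fun x _ =>
      Nat.pow_le_pow_left (Finset.card_le_card (ann_cons_subset x b)) t).trans ?_
    rw [smul_eq_mul]
    refine Nat.mul_le_mul_right _ (le_trans (le_of_eq (by congr!)) ((card_span_le_s12 b).trans
      (Nat.pow_le_pow_right (by norm_num) hkt)))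
  · refine Nat.le_of_mul_le_mul_left ?_ (pow_pos (zero_lt_two' ℕ) t)
    rw [Finset.mul_sum, ← mul_assoc, ← pow_add, Nat.add_sub_cancel' hts]
    refine (Finset.sum_le_card_nsmul _ _ ((ann b).card ^ t) fun x hx => ?_).trans ?_
    · rw [← mul_pow]
      exact Nat.pow_le_pow_left (two_mul_card_ann_cons_le x b (Finset.mem_filter.1 hx).2) t
    · rw [smul_eq_mul]
      refine Nat.mul_le_mul_right _ ((Finset.card_le_univ _).trans ?_)
      rw [card_vec]

lemma sum_ann_pow_le {s t : ℕ} (hts : t ≤ s) (k : ℕ) (hkt : k ≤ t) :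
    ∑ b : Fin k → Fin s → ZMod 2, (ann b).card ^ t ≤
      (2 ^ t + 2 ^ (s - t)) ^ k * (2 ^ s) ^ t := by
  induction k with
  | zero =>
    simp only [pow_zero, one_mul]
    rw [Fintype.sum_unique]
    refine Nat.pow_le_pow_left ((Finset.card_le_univ _).trans ?_) t
    rw [card_vec]
  | succ k ih =>
    rw [← (Fin.consEquiv fun _ : Fin (k + 1) => Fin s → ZMod 2).sum_comp,
      Fintype.sum_prod_type_right]
    refine (Finset.sum_le_sum fun b _ =>
      sum_ann_cons_pow_le (k := k) (by omega) hts b).trans ?_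
    rw [← Finset.mul_sum, pow_succ', mul_assoc]
    exact Nat.mul_le_mul_left _ (ih (by omega))

/-! ### Counting factorizations with a prescribed constant block -/

/-- Solutions of `B_I c = v` form a coset of the annihilator, if there are any. -/
lemma card_solutions_le {ι : Type*} [Fintype ι] {s : ℕ} (b : ι → Fin s → ZMod 2) (v : ZMod 2) :
    (Finset.univ.filter fun c : Fin s → ZMod 2 => ∀ i, b i ⬝ᵥ c = v).card ≤ (ann b).card := by
  classical
  rcases Finset.eq_empty_or_nonempty
    (Finset.univ.filter fun c : Fin s → ZMod 2 => ∀ i, b i ⬝ᵥ c = v) with h | ⟨c, hc⟩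
  · simp [h]
  · refine Finset.card_le_card_of_injOn (fun d => d - c) (fun d hd => ?_)
      (fun d _ e _ h => sub_left_injective h)
    have hc := (Finset.mem_filter.1 hc).2
    have hd := (Finset.mem_filter.1 hd).2
    exact mem_ann.2 fun i => by rw [dotProduct_sub, hc, hd, sub_self]

lemma card_C_le {n s t : ℕ} (B : Matrix (Fin n) (Fin s) (ZMod 2)) (I J : Finset (Fin n))
    (hJ : J.card = t) (v : ZMod 2) :
    (Finset.univ.filter fun C : Matrix (Fin s) (Fin n) (ZMod 2) =>
      ∀ i ∈ I, ∀ j ∈ J, (B * C) i j = v).card ≤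
      (ann fun i : I => B i).card ^ t * (2 ^ s) ^ (n - t) := by
  classical
  set S := Finset.univ.filter fun c : Fin s → ZMod 2 => ∀ i : I, B i ⬝ᵥ c = v with hS
  have h1 : (Finset.univ.filter fun C : Matrix (Fin s) (Fin n) (ZMod 2) =>
      ∀ i ∈ I, ∀ j ∈ J, (B * C) i j = v).card ≤
      (Fintype.piFinset fun j : Fin n => if j ∈ J then S else Finset.univ).card := by
    refine Finset.card_le_card_of_injOn (fun C j k => C k j) (fun C hC => ?_) ?_
    · have hC := (Finset.mem_filter.1 hC).2
      refine Fintype.mem_piFinset.2 fun j => ?_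
      split_ifs with hj
      · exact Finset.mem_filter.2 ⟨Finset.mem_univ _, fun i => hC i i.2 j hj⟩
      · exact Finset.mem_univ _
    · intro C _ D _ h
      ext k j
      exact congrFun (congrFun h j) k
  refine h1.trans ?_
  have h2 : (Finset.univ.filter (· ∉ J)).card = n - t := by
    rw [← Finset.compl_filter, Finset.card_compl]
    simp [hJ]
  rw [Fintype.card_piFinset]
  simp only [apply_ite Finset.card]
  rw [Finset.prod_ite, Finset.prod_const, Finset.prod_const, h2, Finset.filter_mem_eq_inter,
    Finset.univ_inter, hJ, Finset.card_univ, card_vec]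
  exact Nat.mul_le_mul_right _ (Nat.pow_le_pow_left (card_solutions_le _ v) t)

lemma sum_B_eq {n s t : ℕ} (I : Finset (Fin n)) (hI : I.card = t) :
    ∑ B : Matrix (Fin n) (Fin s) (ZMod 2), (ann fun i : I => B i).card ^ t =
      (2 ^ s) ^ (n - t) * ∑ b : Fin t → Fin s → ZMod 2, (ann b).card ^ t := by
  classical
  have h1 : ∑ B : Matrix (Fin n) (Fin s) (ZMod 2), (ann fun i : I => B i).card ^ t =
      ∑ p : (({i : Fin n // i ∈ I} → Fin s → ZMod 2) × ({i : Fin n // i ∉ I} → Fin s → ZMod 2)),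
        (ann p.1).card ^ t :=
    Fintype.sum_equiv (Equiv.piEquivPiSubtypeProd (· ∈ I) fun _ => Fin s → ZMod 2) _ _
      fun B => rfl
  have h2 : Fintype.card {i : Fin n // i ∉ I} = n - t := by
    rw [Fintype.card_subtype_compl]
    simp [hI]
  rw [h1, Fintype.sum_prod_type]
  simp only [Finset.sum_const, Finset.card_univ, Fintype.card_fun, h2, smul_eq_mul,
    ← Finset.mul_sum, ZMod.card, Fintype.card_fin]
  congr 1
  refine Fintype.sum_equiv ((Finset.equivFinOfCardEq hI).arrowCongr (Equiv.refl _)) _ _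
    fun b => ?_
  congr 2
  ext c
  rw [mem_ann, mem_ann]
  exact (Finset.equivFinOfCardEq hI).forall_congr_left

/-- The event that a fixed `I × J` block of the product is constantly `v` has probability at most
`2 ^ t / 2 ^ (t ^ 2)`. -/
lemma card_block_le {n s t : ℕ} (hts : 2 * t ≤ s) (I J : Finset (Fin n))
    (hI : I.card = t) (hJ : J.card = t) (v : ZMod 2) :
    2 ^ (t * t) * (Finset.univ.filter fun BC : Matrix (Fin n) (Fin s) (ZMod 2) ×
        Matrix (Fin s) (Fin n) (ZMod 2) => ∀ i ∈ I, ∀ j ∈ J, (BC.1 * BC.2) i j = v).card ≤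
      2 ^ t * (2 ^ (s * n)) ^ 2 := by
  classical
  have htn : t ≤ n := by
    have := Finset.card_le_univ I
    rwa [hI, Fintype.card_fin] at this
  have h1 : (Finset.univ.filter fun BC : Matrix (Fin n) (Fin s) (ZMod 2) ×
        Matrix (Fin s) (Fin n) (ZMod 2) => ∀ i ∈ I, ∀ j ∈ J, (BC.1 * BC.2) i j = v).card =
      ∑ B : Matrix (Fin n) (Fin s) (ZMod 2),
        (Finset.univ.filter fun C : Matrix (Fin s) (Fin n) (ZMod 2) =>
          ∀ i ∈ I, ∀ j ∈ J, (B * C) i j = v).card := by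
    simp only [Finset.card_filter]
    rw [Fintype.sum_prod_type]
  have h2 : ∑ b : Fin t → Fin s → ZMod 2, (ann b).card ^ t ≤
      (2 ^ (s - t + 1)) ^ t * (2 ^ s) ^ t := by
    refine (sum_ann_pow_le (by omega) t le_rfl).trans ?_
    refine Nat.mul_le_mul_right _ (Nat.pow_le_pow_left ?_ t)
    have : 2 ^ t ≤ 2 ^ (s - t) := Nat.pow_le_pow_right (by norm_num) (by omega)
    rw [pow_succ]
    omega
  rw [h1]
  calc _ ≤ 2 ^ (t * t) * ((2 ^ s) ^ (n - t) * ((2 ^ (s - t + 1)) ^ t * (2 ^ s) ^ t) *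
        (2 ^ s) ^ (n - t)) := by
        refine Nat.mul_le_mul_left _ ((Finset.sum_le_sum fun B _ => card_C_le B I J hJ v).trans ?_)
        rw [← Finset.sum_mul, sum_B_eq I hI]
        gcongr
    _ = 2 ^ t * (2 ^ (s * n)) ^ 2 := by
        obtain ⟨m, rfl⟩ := Nat.exists_eq_add_of_le htn
        obtain ⟨r, rfl⟩ := Nat.exists_eq_add_of_le (show t ≤ s by omega)
        simp only [Nat.add_sub_cancel_left, ← pow_mul, ← pow_add]
        congr 1
        ring

/-! ### The union bound -/

lemma card_bad_le {n s t : ℕ} (hts : 2 * t ≤ s) (hnt : n ^ 2 ≤ 2 ^ t) :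
    t.factorial ^ 2 * {BC : Matrix (Fin n) (Fin s) (ZMod 2) × Matrix (Fin s) (Fin n) (ZMod 2) |
            ∃ I J : Finset (Fin n), I.card = t ∧ J.card = t ∧
              ((∀ i ∈ I, ∀ j ∈ J, (BC.1 * BC.2) i j = 1) ∨
               (∀ i ∈ I, ∀ j ∈ J, (BC.1 * BC.2) i j = 0))}.ncard ≤
      2 * 2 ^ t * (2 ^ (s * n)) ^ 2 := by
  classical
  set E := {BC : Matrix (Fin n) (Fin s) (ZMod 2) × Matrix (Fin s) (Fin n) (ZMod 2) |
            ∃ I J : Finset (Fin n), I.card = t ∧ J.card = t ∧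
              ((∀ i ∈ I, ∀ j ∈ J, (BC.1 * BC.2) i j = 1) ∨
               (∀ i ∈ I, ∀ j ∈ J, (BC.1 * BC.2) i j = 0))} with hE
  let P := Finset.powersetCard t (Finset.univ : Finset (Fin n))
  let F : Finset (Fin n) × Finset (Fin n) × ZMod 2 →
      Finset (Matrix (Fin n) (Fin s) (ZMod 2) × Matrix (Fin s) (Fin n) (ZMod 2)) := fun q =>
    Finset.univ.filter fun BC => ∀ i ∈ q.1, ∀ j ∈ q.2.1, (BC.1 * BC.2) i j = q.2.2
  let X := P ×ˢ P ×ˢ (Finset.univ : Finset (ZMod 2))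
  have hcard : X.card = n.choose t * (n.choose t * 2) := by
    simp [X, P, Finset.card_product, Finset.card_powersetCard, ZMod.card]
  have hsub : E ⊆ ↑(X.biUnion F) := by
    rintro BC ⟨I, J, hI, hJ, h⟩
    rw [Finset.mem_coe, Finset.mem_biUnion]
    rcases h with h | h
    · exact ⟨(I, J, 1), by simp [X, P, Finset.mem_powersetCard, hI, hJ],
        Finset.mem_filter.2 ⟨Finset.mem_univ _, h⟩⟩
    · exact ⟨(I, J, 0), by simp [X, P, Finset.mem_powersetCard, hI, hJ],
        Finset.mem_filter.2 ⟨Finset.mem_univ _, h⟩⟩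
  have h1 : E.ncard ≤ ∑ q ∈ X, (F q).card := by
    refine (Set.ncard_le_ncard hsub (Finset.finite_toSet _)).trans ?_
    rw [Set.ncard_coe_finset]
    exact Finset.card_biUnion_le
  have h2 : 2 ^ (t * t) * E.ncard ≤
      n.choose t * (n.choose t * 2) * (2 ^ t * (2 ^ (s * n)) ^ 2) := by
    refine (Nat.mul_le_mul_left _ h1).trans ?_
    rw [Finset.mul_sum, ← hcard, ← smul_eq_mul X.card]
    refine Finset.sum_le_card_nsmul _ _ _ fun q hq => ?_
    simp only [X, P, Finset.mem_product, Finset.mem_powersetCard] at hq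
    exact card_block_le hts q.1 q.2.1 hq.1.2 hq.2.1.2 q.2.2
  have h3 : t.factorial * n.choose t ≤ n ^ t := by
    rw [← Nat.descFactorial_eq_factorial_mul_choose]
    exact Nat.descFactorial_le_pow n t
  have h4 : (t.factorial * n.choose t) ^ 2 ≤ 2 ^ (t * t) :=
    calc (t.factorial * n.choose t) ^ 2 ≤ (n ^ t) ^ 2 := Nat.pow_le_pow_left h3 2
      _ = (n ^ 2) ^ t := by rw [← pow_mul, ← pow_mul, mul_comm]
      _ ≤ (2 ^ t) ^ t := Nat.pow_le_pow_left hnt t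
      _ = 2 ^ (t * t) := by rw [← pow_mul]
  refine Nat.le_of_mul_le_mul_left ?_ (pow_pos (zero_lt_two' ℕ) (t * t))
  calc 2 ^ (t * t) * (t.factorial ^ 2 * E.ncard) = t.factorial ^ 2 * (2 ^ (t * t) * E.ncard) := by
        ring
    _ ≤ t.factorial ^ 2 * (n.choose t * (n.choose t * 2) * (2 ^ t * (2 ^ (s * n)) ^ 2)) :=
        Nat.mul_le_mul_left _ h2
    _ = (t.factorial * n.choose t) ^ 2 * (2 * 2 ^ t * (2 ^ (s * n)) ^ 2) := by ring
    _ ≤ _ := Nat.mul_le_mul_right _ h4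

/-! ### Parameters and the limit -/

lemma sq_le_two_pow_tSize {n : ℕ} (hn : 2 ≤ n) : n ^ 2 ≤ 2 ^ tSize n := by
  have hn0 : (0 : ℝ) < n := by positivity
  have h : ((n ^ 2 : ℕ) : ℝ) ≤ ((2 ^ tSize n : ℕ) : ℝ) := by
    push_cast
    rw [← Real.rpow_natCast 2 (tSize n), ← Real.logb_le_iff_le_rpow (by norm_num) (by positivity),
      Real.logb_pow]
    exact_mod_cast Nat.le_ceil (2 * Real.logb 2 n)
  exact_mod_cast h

lemma two_mul_tSize_le {n : ℕ} (hn : 2 ≤ n) : 2 * tSize n ≤ sWidth n := by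
  have hL : 1 ≤ Real.logb 2 n := by
    rw [Real.le_logb_iff_rpow_le (by norm_num) (by positivity)]
    simpa using (by exact_mod_cast hn : (2 : ℝ) ≤ n)
  have h1 : (tSize n : ℝ) < 2 * Real.logb 2 n + 1 := Nat.ceil_lt_add_one (by linarith)
  have h2 : 14 * Real.logb 2 n ≤ sWidth n := Nat.le_ceil _
  have : ((2 * tSize n : ℕ) : ℝ) ≤ (sWidth n : ℝ) := by
    push_cast
    linarith
  exact_mod_cast this

lemma tendsto_tSize : Tendsto tSize atTop atTop := by
  refine tendsto_nat_ceil_atTop.comp ?_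
  exact ((Real.tendsto_logb_atTop (by norm_num)).comp tendsto_natCast_atTop_atTop).const_mul_atTop
    (by norm_num)

/-- The fraction of pairs `(B, C)` of an `n × ⌈14 log₂ n⌉` and a `⌈14 log₂ n⌉ × n`
matrix over `𝔽₂` whose product `B * C` contains a `⌈2 log₂ n⌉ × ⌈2 log₂ n⌉`
all-ones or all-zeros submatrix tends to `0` as `n → ∞`. -/
theorem bad_pairs_ratio_tendsto_zero :
    Tendsto
      (fun n : ℕ =>
        (({BC : Matrix (Fin n) (Fin (sWidth n)) (ZMod 2) ×
              Matrix (Fin (sWidth n)) (Fin n) (ZMod 2) |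
            ∃ I J : Finset (Fin n), I.card = tSize n ∧ J.card = tSize n ∧
              ((∀ i ∈ I, ∀ j ∈ J, (BC.1 * BC.2) i j = 1) ∨
               (∀ i ∈ I, ∀ j ∈ J, (BC.1 * BC.2) i j = 0))}.ncard : ℝ) /
          (Fintype.card (Matrix (Fin n) (Fin (sWidth n)) (ZMod 2) ×
              Matrix (Fin (sWidth n)) (Fin n) (ZMod 2)) : ℝ)))
      atTop (nhds 0) := by
  have hlim : Tendsto (fun n : ℕ => 2 * ((2 : ℝ) ^ tSize n / (tSize n).factorial)) atTop
      (nhds 0) := by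
    simpa using ((FloorSemiring.tendsto_pow_div_factorial_atTop (2 : ℝ)).comp
      tendsto_tSize).const_mul 2
  refine tendsto_of_tendsto_of_tendsto_of_le_of_le' tendsto_const_nhds hlim
    (Eventually.of_forall fun n => by positivity) ?_
  filter_upwards [eventually_ge_atTop 2] with n hn
  have hbad := card_bad_le (two_mul_tSize_le hn) (sq_le_two_pow_tSize hn)
  have hcard : Fintype.card (Matrix (Fin n) (Fin (sWidth n)) (ZMod 2) ×
      Matrix (Fin (sWidth n)) (Fin n) (ZMod 2)) = (2 ^ (sWidth n * n)) ^ 2 := by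
    change Fintype.card ((Fin n → Fin (sWidth n) → ZMod 2) × (Fin (sWidth n) → Fin n → ZMod 2)) = _
    simp only [Fintype.card_prod, Fintype.card_fun, Fintype.card_fin, ZMod.card]
    ring
  rw [hcard]
  have hbad' := Nat.cast_le (α := ℝ).2 hbad
  push_cast at hbad' ⊢
  have hf : (1 : ℝ) ≤ (tSize n).factorial := by exact_mod_cast Nat.factorial_pos _
  rw [div_le_iff₀ (by positivity), ← mul_div_assoc, div_mul_eq_mul_div,
    le_div_iff₀ (by positivity), mul_comm]
  refine le_trans (mul_le_mul_of_nonneg_right ?_ (Nat.cast_nonneg _)) hbad'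
  nlinarith
end

section
/- For n ∈ ℕ, let s(n) = ⌈14·log₂ n⌉, and let P(n) be the set of all pairs (B, C) where B is an n×s(n) matrix and C is an s(n)×n matrix over 𝔽₂. Let F(n) ⊆ P(n) be the set of pairs for which the product B·C has at most 0.3·n² entries equal to 1. Then the ratio |F(n)| / |P(n)| tends to 0 as n → ∞. -/
/-!
The proof is a second moment argument. Let `χ : 𝔽₂ → {1, -1}` be the nontrivial character and
`T (B, C) = ∑ i, ∑ j, χ ((B * C) i j)`, so that `T = n² - 2 · #ones`, and a pair whose product has
at most `0.3 n²` ones satisfies `T ≥ 0.4 n²` (`signSum_eq`). By Cauchy–Schwarz over the rows,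
`T² ≤ n ∑ i, ∑ j, ∑ j', χ ((B * C) i j) χ ((B * C) i j')`.

Summing over all `(B, C)`, a diagonal term `j = j'` contributes the number `P` of pairs. For
`j ≠ j'`, a matrix `B` with nonzero row `i` contributes `0`, because adding a suitable matrix unit
to `C` flips `χ ((B * C) i j)` only (`sum_sgn_mul_sgn_eq_zero`), and only a fraction `2⁻ˢ` of the
matrices `B` have row `i` equal to zero (`card_row_eq_zero_mul_le`). Hence
`∑ T² ≤ P (n³ + n⁴ / 2ˢ)` (`sum_signSum_sq_le`), and by Markov's inequality the sparse pairs form a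
fraction at most `6.25 (1 / n + 2⁻ˢ)` of all pairs. For `s = ⌈14 log₂ n⌉` we have `2ˢ ≥ n`, which
makes this at most `12.5 / n`.
-/

open Filter

/-- The nontrivial additive character of `𝔽₂`, with values `1` and `-1` in `ℝ`. -/
noncomputable def sgn (x : ZMod 2) : ℝ := if x = 1 then -1 else 1

lemma sgn_add_one (x : ZMod 2) : sgn (x + 1) = -sgn x := by
  have h : ∀ x : ZMod 2, x = 0 ∨ x = 1 := by decide
  have h2 : (1 : ZMod 2) + 1 = 0 := by decide
  rcases h x with rfl | rfl <;> simp [sgn, h2]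

lemma sgn_mul_self (x : ZMod 2) : sgn x * sgn x = 1 := by
  unfold sgn; split_ifs <;> norm_num

/-- The number of zeros minus the number of ones of the product `B * C`. -/
noncomputable def signSum {n s : ℕ}
    (BC : Matrix (Fin n) (Fin s) (ZMod 2) × Matrix (Fin s) (Fin n) (ZMod 2)) : ℝ :=
  ∑ i, ∑ j, sgn ((BC.1 * BC.2) i j)

lemma signSum_eq {n s : ℕ}
    (BC : Matrix (Fin n) (Fin s) (ZMod 2) × Matrix (Fin s) (Fin n) (ZMod 2)) :
    signSum BC = (n : ℝ) ^ 2 -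
      2 * ({p : Fin n × Fin n | (BC.1 * BC.2) p.1 p.2 = 1}.ncard : ℝ) := by
  have h1 : ∀ x : ZMod 2, sgn x = 1 - 2 * (if x = 1 then 1 else 0) := by
    intro x; unfold sgn; split_ifs <;> norm_num
  have h2 : {p : Fin n × Fin n | (BC.1 * BC.2) p.1 p.2 = 1}.ncard =
      (Finset.univ.filter fun p : Fin n × Fin n => (BC.1 * BC.2) p.1 p.2 = 1).card := by
    rw [← Set.ncard_coe_finset]; simp
  rw [h2, signSum, ← Fintype.sum_prod_type' (f := fun i j => sgn ((BC.1 * BC.2) i j))]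
  simp_rw [h1]
  rw [Finset.sum_sub_distrib, ← Finset.mul_sum, Finset.sum_boole]
  simp [sq]

/-- If row `i` of `B` is nonzero, then for uniformly random `C` the entries `(i, j)` and `(i, j')`
of `B * C` are uncorrelated: translating `C` by a matrix unit is a sign-reversing bijection. -/
lemma sum_sgn_mul_sgn_eq_zero {n s : ℕ} (B : Matrix (Fin n) (Fin s) (ZMod 2)) (i : Fin n)
    (hB : B i ≠ 0) {j j' : Fin n} (hj : j ≠ j') :
    ∑ C : Matrix (Fin s) (Fin n) (ZMod 2), sgn ((B * C) i j) * sgn ((B * C) i j') = 0 := by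
  obtain ⟨k, hk⟩ := Function.ne_iff.mp hB
  have hk1 : B i k = 1 := by
    have : ∀ x : ZMod 2, x ≠ 0 → x = 1 := by decide
    exact this _ hk
  have key := Equiv.sum_comp (Equiv.addRight (Matrix.single k j (1 : ZMod 2)))
    (fun C : Matrix (Fin s) (Fin n) (ZMod 2) => sgn ((B * C) i j) * sgn ((B * C) i j'))
  have h (C : Matrix (Fin s) (Fin n) (ZMod 2)) :
      sgn ((B * (C + Matrix.single k j 1 : Matrix (Fin s) (Fin n) (ZMod 2))) i j) *
        sgn ((B * (C + Matrix.single k j 1 : Matrix (Fin s) (Fin n) (ZMod 2))) i j') =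
        -(sgn ((B * C) i j) * sgn ((B * C) i j')) := by
    rw [Matrix.mul_add, Matrix.add_apply, Matrix.add_apply, Matrix.mul_single_apply_same,
      Matrix.mul_single_apply_of_ne _ _ _ _ _ hj.symm, hk1, mul_one, sgn_add_one, add_zero, neg_mul]
  simp only [Equiv.coe_addRight, h, Finset.sum_neg_distrib] at key
  linarith

lemma card_row_eq_zero_mul_le {n s : ℕ} (i : Fin n) :
    (Finset.univ.filter fun B : Matrix (Fin n) (Fin s) (ZMod 2) => B i = 0).card * 2 ^ s ≤
      Fintype.card (Matrix (Fin n) (Fin s) (ZMod 2)) := by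
  have h2 : (Finset.univ : Finset (Fin s → ZMod 2)).card = 2 ^ s := by simp
  rw [← h2, ← Finset.card_product, ← Finset.card_univ]
  -- A matrix with zero row `i` and a vector `v` are recovered from the matrix with row `i` set
  -- to `v`.
  refine Finset.card_le_card_of_injOn (fun p => p.1.updateRow i p.2) (by simp) ?_
  rintro ⟨B, v⟩ h ⟨B', v'⟩ h' heq
  simp only [Finset.coe_product, Set.mem_prod, Finset.mem_coe, Finset.mem_filter,
    Finset.mem_univ, true_and, and_true] at h h'
  have hrow (r : Fin n) : B.updateRow i v r = B'.updateRow i v' r := congrFun heq r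
  refine Prod.ext ?_ ?_
  · funext r
    by_cases hr : r = i
    · subst hr; exact h.trans h'.symm
    · simpa [Matrix.updateRow_ne hr] using hrow r
  · simpa using hrow i

lemma sum_sgn_mul_sgn_le {n s : ℕ} (i j j' : Fin n) :
    ∑ BC : Matrix (Fin n) (Fin s) (ZMod 2) × Matrix (Fin s) (Fin n) (ZMod 2),
        sgn ((BC.1 * BC.2) i j) * sgn ((BC.1 * BC.2) i j') ≤
      (Fintype.card (Matrix (Fin n) (Fin s) (ZMod 2) × Matrix (Fin s) (Fin n) (ZMod 2)) : ℝ) *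
        ((if j = j' then 1 else 0) + 1 / 2 ^ s) := by
  by_cases hj : j = j'
  · subst hj
    simp only [sgn_mul_self, Finset.sum_const, Finset.card_univ, nsmul_eq_mul, if_true]
    gcongr
    simp
  · rw [if_neg hj, zero_add, Fintype.sum_prod_type]
    have h (B : Matrix (Fin n) (Fin s) (ZMod 2)) :
        ∑ C : Matrix (Fin s) (Fin n) (ZMod 2), sgn ((B * C) i j) * sgn ((B * C) i j') =
          (if B i = 0 then 1 else 0) * (Fintype.card (Matrix (Fin s) (Fin n) (ZMod 2)) : ℝ) := by
      split_ifs with hB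
      · have h0 (l : Fin n) (C : Matrix (Fin s) (Fin n) (ZMod 2)) : (B * C) i l = 0 := by
          simp [Matrix.mul_apply, hB]
        simp only [h0, sgn_mul_self, Finset.sum_const, Finset.card_univ, nsmul_eq_mul]
        ring
      · rw [sum_sgn_mul_sgn_eq_zero B i hB hj, zero_mul]
    simp only [h]
    rw [← Finset.sum_mul, Finset.sum_boole, Fintype.card_prod, Nat.cast_mul, mul_one_div,
      le_div_iff₀ (by positivity), mul_right_comm]
    gcongr
    exact_mod_cast card_row_eq_zero_mul_le i

lemma sum_signSum_sq_le (n s : ℕ) :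
    ∑ BC : Matrix (Fin n) (Fin s) (ZMod 2) × Matrix (Fin s) (Fin n) (ZMod 2), signSum BC ^ 2 ≤
      (Fintype.card (Matrix (Fin n) (Fin s) (ZMod 2) × Matrix (Fin s) (Fin n) (ZMod 2)) : ℝ) *
        ((n : ℝ) ^ 3 + (n : ℝ) ^ 4 / 2 ^ s) := by
  set P : ℝ :=
    (Fintype.card (Matrix (Fin n) (Fin s) (ZMod 2) × Matrix (Fin s) (Fin n) (ZMod 2)) : ℝ)
  have h (BC : Matrix (Fin n) (Fin s) (ZMod 2) × Matrix (Fin s) (Fin n) (ZMod 2)) :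
      signSum BC ^ 2 ≤
        n * ∑ i, ∑ j, ∑ j', sgn ((BC.1 * BC.2) i j) * sgn ((BC.1 * BC.2) i j') := by
    have := sq_sum_le_card_mul_sum_sq (s := (Finset.univ : Finset (Fin n)))
      (f := fun i => ∑ j, sgn ((BC.1 * BC.2) i j))
    simpa [signSum, sq, Finset.sum_mul_sum] using this
  calc _ ≤ ∑ BC : Matrix (Fin n) (Fin s) (ZMod 2) × Matrix (Fin s) (Fin n) (ZMod 2),
        n * ∑ i, ∑ j, ∑ j', sgn ((BC.1 * BC.2) i j) * sgn ((BC.1 * BC.2) i j') :=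
      Finset.sum_le_sum fun BC _ => h BC
    _ = n * ∑ i : Fin n, ∑ j : Fin n, ∑ j' : Fin n,
        ∑ BC : Matrix (Fin n) (Fin s) (ZMod 2) × Matrix (Fin s) (Fin n) (ZMod 2),
          sgn ((BC.1 * BC.2) i j) * sgn ((BC.1 * BC.2) i j') := by
      rw [← Finset.mul_sum, Finset.sum_comm]
      congr 1
      refine Finset.sum_congr rfl fun i _ => ?_
      rw [Finset.sum_comm]
      refine Finset.sum_congr rfl fun j _ => ?_
      rw [Finset.sum_comm]
    _ ≤ n * ∑ i : Fin n, ∑ j : Fin n, ∑ j' : Fin n,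
        P * ((if j = j' then 1 else 0) + 1 / 2 ^ s) := by
      gcongr with i _ j _ j' _
      exact sum_sgn_mul_sgn_le i j j'
    _ = _ := by
      simp only [← Finset.mul_sum, Finset.sum_add_distrib, Finset.sum_ite_eq, Finset.mem_univ,
        if_true, Finset.sum_const, Finset.card_univ, Fintype.card_fin, nsmul_eq_mul]
      ring

lemma le_two_pow_sWidth {n : ℕ} (hn : 1 ≤ n) : (n : ℝ) ≤ 2 ^ sWidth n := by
  have hn' : (1 : ℝ) ≤ n := by exact_mod_cast hn
  have h0 : 0 ≤ Real.logb 2 n := Real.logb_nonneg (by norm_num) hn'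
  have h1 : 14 * Real.logb 2 n ≤ sWidth n := Nat.le_ceil _
  rw [← Real.rpow_natCast, ← Real.logb_le_iff_le_rpow (by norm_num) (by linarith)]
  linarith

/-- Markov's inequality for `signSum ^ 2` on the set of sparse pairs. -/
lemma ncard_sparse_mul_le (n s : ℕ) :
    ({BC : Matrix (Fin n) (Fin s) (ZMod 2) × Matrix (Fin s) (Fin n) (ZMod 2) |
        ({p : Fin n × Fin n | (BC.1 * BC.2) p.1 p.2 = 1}.ncard : ℝ) ≤
          (0.3 : ℝ) * (n : ℝ) ^ 2}.ncard : ℝ) * (0.4 * (n : ℝ) ^ 2) ^ 2 ≤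
      ∑ BC : Matrix (Fin n) (Fin s) (ZMod 2) × Matrix (Fin s) (Fin n) (ZMod 2),
        signSum BC ^ 2 := by
  classical
  rw [Set.ncard_eq_toFinset_card', ← nsmul_eq_mul]
  refine (Finset.card_nsmul_le_sum _ (fun BC => signSum BC ^ 2) _ ?_).trans
    (Finset.sum_le_sum_of_subset_of_nonneg (Finset.subset_univ _) fun _ _ _ => sq_nonneg _)
  intro BC hBC
  simp only [Set.mem_toFinset, Set.mem_ofPred_eq] at hBC
  have h := signSum_eq BC
  refine pow_le_pow_left₀ (by positivity) ?_ 2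
  linarith

/-- The fraction of pairs `(B, C)` of an `n × ⌈14 log₂ n⌉` and a `⌈14 log₂ n⌉ × n`
matrix over `𝔽₂` whose product `B * C` has at most `0.3 n²` ones tends to `0`
as `n → ∞`. -/
theorem sparse_pairs_ratio_tendsto_zero :
    Tendsto
      (fun n : ℕ =>
        (({BC : Matrix (Fin n) (Fin (sWidth n)) (ZMod 2) ×
              Matrix (Fin (sWidth n)) (Fin n) (ZMod 2) |
            ({p : Fin n × Fin n | (BC.1 * BC.2) p.1 p.2 = 1}.ncard : ℝ) ≤
              (0.3 : ℝ) * (n : ℝ) ^ 2}.ncard : ℝ) /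
          (Fintype.card (Matrix (Fin n) (Fin (sWidth n)) (ZMod 2) ×
              Matrix (Fin (sWidth n)) (Fin n) (ZMod 2)) : ℝ)))
      atTop (nhds 0) := by
  refine squeeze_zero' (g := fun n : ℕ => (12.5 : ℝ) / n)
    (Eventually.of_forall fun n => by positivity) ?_ (tendsto_const_div_atTop_nhds_zero_nat _)
  filter_upwards [eventually_ge_atTop 1] with n hn
  have hn0 : (0 : ℝ) < n := by exact_mod_cast hn
  have hP : (0 : ℝ) < Fintype.card (Matrix (Fin n) (Fin (sWidth n)) (ZMod 2) ×
      Matrix (Fin (sWidth n)) (Fin n) (ZMod 2)) := by exact_mod_cast Fintype.card_pos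
  have hM := (ncard_sparse_mul_le n (sWidth n)).trans (sum_signSum_sq_le n (sWidth n))
  have hs : (n : ℝ) ^ 4 / 2 ^ sWidth n ≤ (n : ℝ) ^ 3 := by
    rw [div_le_iff₀ (by positivity), pow_succ]
    gcongr
    exact le_two_pow_sWidth hn
  have hM' := hM.trans (mul_le_mul_of_nonneg_left (add_le_add_right hs _) hP.le)
  rw [div_le_div_iff₀ hP hn0]
  refine le_of_mul_le_mul_right ?_ (show (0 : ℝ) < 0.16 * (n : ℝ) ^ 3 by positivity)
  refine le_of_eq_of_le ?_ (hM'.trans_eq ?_) <;> ring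
end
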